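/- Let ψ be a variational solution satisfying the growth condition and assume |f(z)| ≤ Cz for all z∈(0,z₀). Let X₀=(x₀,0)∈Ω∩∂{ψ>0} with x₀>0 be a stagnation point. Then there exists r₀>0 sufficiently small such that for all r∈(0,r₀): r∫_{∂B_r(X₀)}(1/x)ψ² dH¹ ≥ ∫_{B_r(X₀)}(1/x)ψ² dX. -/

import Mathlib

/-!
The bulk integral of `ψ²/x` is estimated through Green's formula on a disc against the weight
`η = r² - |X - X₀|²`, which is positive inside and vanishes on the circle.

If `w` is `C²` and `L w = div((1/x)∇w)`, the field `(η∇w - w∇η)/x` has divergence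
`η L w + (w/x)(4 - 2(x - x₀)/x)` and flux density `2rw/x` through the circle (`green_div`,
`green_flux`). For `w = ψ²` one expects `L w ≥ 2ψ L ψ = -2xψ f(ψ) ≥ -2Cxψ²`, so on small discs the
divergence is at least `(4 - o(1))ψ²/x`, while the flux is `2r` times the integral of `ψ²/x` over
the circle: asymptotically the inequality holds with a factor `2` to spare. Only `7/2` of the `4`
is kept below; the rest absorbs the lower-order terms.

Three points need care.

* `ψ²` need not be `C²` across the free boundary. It is replaced by `w = cut ε ψ`, where
  `cut ε z = max(z - ε, 0)³/z` is `C²`, is nondecreasing and convex on `(0, ∞)`, vanishes for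
  `z ≤ ε` and satisfies `z² - 3εz ≤ cut ε z ≤ z²`. Then `w` vanishes near the zero set of `ψ`, the
  lower bound `L w ≥ -3Cxψ²` is uniform in `ε` (`axiOp_cut_lower`), and `ε → 0` at the end.

* The equation is available only through domain variations. Testing with `χ eᵢ`, for `χ` supported
  in `{ψ > 0}`, gives `∂ᵢψ (Lψ + x f(ψ)) = 0` there (`momentum`). Hence `Lψ = -x f(ψ)` on the
  closure of `{∇ψ ≠ 0}`, and `Lψ = 0` on the interior of `{∇ψ = 0}`. In both cases
  `Lψ ≥ -Cxψ` where `0 < ψ < z₀` (`axiOp_lower`).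

* The boundary integral is with respect to Hausdorff measure. The comparison of chord and arc,
  `|s - t| ≤ (π/2)·chord/r` for `|s - t| ≤ π`, bounds arc length by `π/2` times `H1`
  (`arc_integral_le`). The resulting inequality is `(7/2)∫ψ²/x ≤ π r ∫_{∂B}ψ²/x`, which suffices
  because `π < 7/2`.
-/

open MeasureTheory Metric Set Filter
open scoped Topology RealInnerProductSpace ENNReal NNReal

noncomputable section

/-- Points of the plane, with coordinates `X 0 = x` and `X 1 = y`. -/
abbrev Pt : Type := EuclideanSpace ℝ (Fin 2)

/-- One-dimensional Hausdorff measure on the plane. -/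
def H1 : Measure Pt := μH[1]

/-- The characteristic function of the positivity set `{ψ > 0}`. -/
def chiPos (ψ : Pt → ℝ) (X : Pt) : ℝ := if 0 < ψ X then 1 else 0

/-- The primitive `F(z) = ∫₀^z f(s) ds` of the vorticity function `f`. -/
def primF (f : ℝ → ℝ) (z : ℝ) : ℝ := ∫ s in (0:ℝ)..z, f s

/-- Divergence of a vector field on the plane. -/
def divg (φ : Pt → Pt) (X : Pt) : ℝ :=
  ∑ i, fderiv ℝ φ X (EuclideanSpace.single i 1) i

/-- Outer normal derivative `∇ψ·ν` on the sphere `∂B_r(X₀)`, `ν = (X - X₀)/r`. -/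
def nder (ψ : Pt → ℝ) (X₀ : Pt) (r : ℝ) (X : Pt) : ℝ :=
  ⟪gradient ψ X, X - X₀⟫ / r

/-- A variational solution of the axisymmetric free boundary problem
`div((1/x)∇ψ) = -x f(ψ)` in `Ω ∩ {ψ > 0}`, `(1/x²)|∇ψ|² = y` on `Ω ∩ ∂{ψ > 0}`. -/
structure VariationalSolution (Ω : Set Pt) (ψ : Pt → ℝ) (f : ℝ → ℝ) : Prop where
  open_dom : IsOpen Ω
  conn_dom : IsConnected Ω
  halfplane : ∀ X ∈ Ω, 0 ≤ X 0
  axis_not_frontier : Ω ∩ {X : Pt | X 0 = 0} ∩ frontier Ω = ∅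
  cont_f : Continuous f
  nonneg : ∀ X ∈ Ω, 0 ≤ ψ X
  axis_zero : ∀ X ∈ Ω, X 0 = 0 → ψ X = 0
  cont : ContinuousOn ψ Ω
  smooth : ContDiffOn ℝ 2 ψ (Ω ∩ {X : Pt | 0 < ψ X})
  zero_below : ∀ X : Pt, X 1 ≤ 0 → ψ X = 0
  loc_sobolev : ∀ K : Set Pt, K ⊆ Ω → IsCompact K →
    IntegrableOn (fun X : Pt => (ψ X ^ 2 + ‖gradient ψ X‖ ^ 2) / X 0) K volume
  axis_limit_y : ∀ X₀ ∈ Ω ∩ {X : Pt | X 0 = 0},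
    Tendsto (fun X : Pt => gradient ψ X 1 / X 0)
      (𝓝[Ω ∩ {X : Pt | 0 < ψ X}] X₀) (𝓝 0)
  axis_limit_x : ∀ X₀ ∈ Ω ∩ {X : Pt | X 0 = 0}, ∃ L : ℝ,
    Tendsto (fun X : Pt => gradient ψ X 0 / X 0)
      (𝓝[Ω ∩ {X : Pt | 0 < ψ X}] X₀) (𝓝 L)
  domain_variation : ∀ φ : Pt → Pt, ContDiff ℝ (⊤ : ℕ∞) φ → HasCompactSupport φ →
    tsupport φ ⊆ Ω → (∀ X : Pt, X 0 = 0 → φ X 0 = 0) →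
    (∫ X in Ω, ((‖gradient ψ X‖ ^ 2 / X 0 - 2 * X 0 * primF f (ψ X)
          + X 0 * X 1 * chiPos ψ X) * divg φ X
        - 2 / X 0 * ⟪gradient ψ X, fderiv ℝ φ X (gradient ψ X)⟫
        + (-(‖gradient ψ X‖ ^ 2 / X 0 ^ 2) - 2 * primF f (ψ X)
            + X 1 * chiPos ψ X) * φ X 0
        + X 0 * chiPos ψ X * φ X 1)) = 0

/-- A stagnation point: a free boundary point `X₀ = (x₀, 0)` with `x₀ > 0`. -/
def StagnationPoint (Ω : Set Pt) (ψ : Pt → ℝ) (X₀ : Pt) : Prop :=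
  X₀ ∈ Ω ∩ frontier {X : Pt | 0 < ψ X} ∧ 0 < X₀ 0 ∧ X₀ 1 = 0

/-- `δ = min{x₀, dist(X₀, ∂Ω)}/2`. -/
def sdelta (Ω : Set Pt) (X₀ : Pt) : ℝ :=
  min (X₀ 0) (Metric.infDist X₀ (frontier Ω)) / 2

/-- Growth condition: `|∇ψ|²/x² ≤ C(|y| + |x - x₀|)` near every free boundary point. -/
def GrowthCondition (Ω : Set Pt) (ψ : Pt → ℝ) : Prop :=
  ∃ C : ℝ, 0 < C ∧ ∀ X₀ ∈ Ω ∩ frontier {X : Pt | 0 < ψ X},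
    ∀ X ∈ ball X₀ (sdelta Ω X₀),
      ‖gradient ψ X‖ ^ 2 / (X 0) ^ 2 ≤ C * (|X 1| + |X 0 - X₀ 0|)

/-- Assumption on the vorticity: `|f(z)| ≤ C z` for all `z ∈ (0, z₀)`. -/
def VorticityBound (f : ℝ → ℝ) : Prop :=
  ∃ C z₀ : ℝ, 0 < z₀ ∧ ∀ z ∈ Ioo (0:ℝ) z₀, |f z| ≤ C * z

/-- The weighted boundary integral `∫_{∂B_r(X₀)} (1/x) ψ² dH¹`. -/
def bden (ψ : Pt → ℝ) (X₀ : Pt) (r : ℝ) : ℝ :=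
  ∫ X in sphere X₀ r, ψ X ^ 2 / X 0 ∂H1

/-- `I(r)`. -/
def Iq (ψ : Pt → ℝ) (f : ℝ → ℝ) (X₀ : Pt) (r : ℝ) : ℝ :=
  (∫ X in ball X₀ r,
    (‖gradient ψ X‖ ^ 2 / X 0 - X 0 * ψ X * f (ψ X) + X 0 * X 1 * chiPos ψ X)) / r ^ 3

/-- `J(r)`. -/
def Jq (ψ : Pt → ℝ) (X₀ : Pt) (r : ℝ) : ℝ := bden ψ X₀ r / r ^ 4

/-- `K(r)`. -/
def Kq (ψ : Pt → ℝ) (f : ℝ → ℝ) (X₀ : Pt) (r : ℝ) : ℝ :=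
  r * ∫ X in sphere X₀ r, (2 * X 0 * primF f (ψ X) - X 0 * ψ X * f (ψ X)) ∂H1
  + ∫ X in ball X₀ r, (2 * X₀ 0 * primF f (ψ X) - 6 * X 0 * primF f (ψ X))

/-- `I₁(r)`. -/
def I1q (ψ : Pt → ℝ) (X₀ : Pt) (r : ℝ) : ℝ :=
  -∫ X in ball X₀ r, (X 0 - X₀ 0) / X 0 ^ 2 * ‖gradient ψ X‖ ^ 2

/-- `I₂(r)`. -/
def I2q (ψ : Pt → ℝ) (X₀ : Pt) (r : ℝ) : ℝ :=
  ∫ X in ball X₀ r, (X 0 - X₀ 0) * X 1 * chiPos ψ X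

/-- `J₁(r)`. -/
def J1q (ψ : Pt → ℝ) (X₀ : Pt) (r : ℝ) : ℝ :=
  ∫ X in sphere X₀ r, (X 0 - X₀ 0) / X 0 ^ 2 * ψ X ^ 2 ∂H1

/-- The Weiss boundary-adjusted energy `Φ(r) = I(r) - (3/2)J(r)`. -/
def Φq (ψ : Pt → ℝ) (f : ℝ → ℝ) (X₀ : Pt) (r : ℝ) : ℝ :=
  Iq ψ f X₀ r - 3 / 2 * Jq ψ X₀ r

/-- `D(r)`. -/
def Dq (ψ : Pt → ℝ) (f : ℝ → ℝ) (X₀ : Pt) (r : ℝ) : ℝ :=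
  r * (∫ X in ball X₀ r, (‖gradient ψ X‖ ^ 2 / X 0 - X 0 * ψ X * f (ψ X)))
    / bden ψ X₀ r

/-- `V(r)`. -/
def Vq (ψ : Pt → ℝ) (X₀ : Pt) (r : ℝ) : ℝ :=
  (r * ∫ X in ball X₀ r, max (X 1) 0 * (X₀ 0 - X 0 * chiPos ψ X)
    + r ^ 4 * ∫ t in (0:ℝ)..r, (I1q ψ X₀ t + I2q ψ X₀ t) / t ^ 4
    + 3 / 2 * r ^ 4 * ∫ t in (0:ℝ)..r, J1q ψ X₀ t / t ^ 5)
    / bden ψ X₀ r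

/-- `Z(r)`. -/
def Zq (ψ : Pt → ℝ) (X₀ : Pt) (r : ℝ) : ℝ := J1q ψ X₀ r / bden ψ X₀ r

/-- The frequency `H(r) = D(r) - V(r)`. -/
def Hq (ψ : Pt → ℝ) (f : ℝ → ℝ) (X₀ : Pt) (r : ℝ) : ℝ :=
  Dq ψ f X₀ r - Vq ψ X₀ r

/-- Degenerate stagnation points: `Φ(0+) = x₀ ∫_{B₁} y⁺ dX`. -/
def DegeneratePoint (Ω : Set Pt) (ψ : Pt → ℝ) (f : ℝ → ℝ) (X₀ : Pt) : Prop :=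
  StagnationPoint Ω ψ X₀ ∧
    Tendsto (Φq ψ f X₀) (𝓝[>] (0:ℝ))
      (𝓝 (X₀ 0 * ∫ X in ball (0:Pt) 1, max (X 1) 0))

/-- The blow-up `φ_r(X) = ψ(X₀ + rX)/√(r⁻¹∫_{∂B_r(X₀)}(1/x)ψ² dH¹)`. -/
def blowup (ψ : Pt → ℝ) (X₀ : Pt) (r : ℝ) (X : Pt) : ℝ :=
  ψ (X₀ + r • X) / Real.sqrt (bden ψ X₀ r / r)

end

/-! ### The divergence theorem on a disc -/

/-- The `i`-th partial derivative of a scalar function on the plane. -/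
noncomputable def pd (i : Fin 2) (g : Pt → ℝ) (X : Pt) : ℝ := fderiv ℝ g X (EuclideanSpace.single i 1)

/-- The point of polar coordinates `(ρ, θ)` around `X₀`. -/
noncomputable def arc (X₀ : Pt) (ρ θ : ℝ) : Pt :=
  X₀ + (ρ * Real.cos θ) • EuclideanSpace.single 0 1 + (ρ * Real.sin θ) • EuclideanSpace.single 1 1

lemma arc_zero (X₀ : Pt) (ρ θ : ℝ) : arc X₀ ρ θ 0 = X₀ 0 + ρ * Real.cos θ := by
  simp [arc]

lemma arc_one (X₀ : Pt) (ρ θ : ℝ) : arc X₀ ρ θ 1 = X₀ 1 + ρ * Real.sin θ := by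
  simp [arc]

lemma dist_sq_Pt (X Y : Pt) : dist X Y ^ 2 = (X 0 - Y 0) ^ 2 + (X 1 - Y 1) ^ 2 := by
  rw [EuclideanSpace.dist_eq, Real.sq_sqrt (by positivity)]
  simp [Real.dist_eq]

lemma dist_arc (X₀ : Pt) (ρ θ : ℝ) : dist (arc X₀ ρ θ) X₀ = |ρ| := by
  rw [← sq_eq_sq₀ dist_nonneg (abs_nonneg _), dist_sq_Pt, arc_zero, arc_one, sq_abs]
  linear_combination ρ ^ 2 * Real.sin_sq_add_cos_sq θ

lemma continuous_arc (X₀ : Pt) : Continuous (fun p : ℝ × ℝ => arc X₀ p.1 p.2) := by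
  unfold arc; fun_prop

lemma Pt_decomp (v : Pt) : v = v 0 • EuclideanSpace.single 0 1 + v 1 • EuclideanSpace.single 1 1 := by
  ext i; fin_cases i <;> simp

lemma fderiv_eq_pd (g : Pt → ℝ) (X v : Pt) : fderiv ℝ g X v = v 0 * pd 0 g X + v 1 * pd 1 g X := by
  conv_lhs => rw [Pt_decomp v]
  simp [pd]

lemma hasDerivAt_radial {g : Pt → ℝ} {X₀ : Pt} {ρ θ : ℝ}
    (hg : DifferentiableAt ℝ g (arc X₀ ρ θ)) :
    HasDerivAt (fun t => g (arc X₀ t θ))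
      (Real.cos θ * pd 0 g (arc X₀ ρ θ) + Real.sin θ * pd 1 g (arc X₀ ρ θ)) ρ := by
  have h1 : HasDerivAt (fun t => arc X₀ t θ)
      (Real.cos θ • EuclideanSpace.single 0 1 + Real.sin θ • EuclideanSpace.single 1 1 : Pt) ρ := by
    unfold arc
    have a := ((hasDerivAt_id ρ).mul_const (Real.cos θ)).smul_const
      (EuclideanSpace.single 0 1 : Pt)
    have b := ((hasDerivAt_id ρ).mul_const (Real.sin θ)).smul_const
      (EuclideanSpace.single 1 1 : Pt)
    simpa using! (a.const_add X₀).add b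
  have h2 := hg.hasFDerivAt.comp_hasDerivAt ρ h1
  rw [fderiv_eq_pd] at h2
  simpa using! h2

lemma hasDerivAt_angular {g : Pt → ℝ} {X₀ : Pt} {ρ θ : ℝ}
    (hg : DifferentiableAt ℝ g (arc X₀ ρ θ)) :
    HasDerivAt (fun t => g (arc X₀ ρ t))
      (-(ρ * Real.sin θ) * pd 0 g (arc X₀ ρ θ) + ρ * Real.cos θ * pd 1 g (arc X₀ ρ θ)) θ := by
  have h1 : HasDerivAt (fun t => arc X₀ ρ t)
      ((-(ρ * Real.sin θ)) • EuclideanSpace.single 0 1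
        + (ρ * Real.cos θ) • EuclideanSpace.single 1 1 : Pt) θ := by
    unfold arc
    have a := ((Real.hasDerivAt_cos θ).const_mul ρ).smul_const (EuclideanSpace.single 0 1 : Pt)
    have b := ((Real.hasDerivAt_sin θ).const_mul ρ).smul_const (EuclideanSpace.single 1 1 : Pt)
    simpa using! (a.const_add X₀).add b
  have h2 := hg.hasFDerivAt.comp_hasDerivAt θ h1
  rw [fderiv_eq_pd] at h2
  simpa using! h2

/-- Integration over a disc in polar coordinates. -/
lemma integral_ball_polar (h : Pt → ℝ) (X₀ : Pt) (r : ℝ) :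
    ∫ X in ball X₀ r, h X
      = ∫ p in Icc ((0 : ℝ), -Real.pi) (r, Real.pi), p.1 * h (arc X₀ p.1 p.2) := by
  have e1 : ∫ X in ball X₀ r, h X = ∫ X, (ball X₀ r).indicator h X :=
    (integral_indicator measurableSet_ball).symm
  have e2 : ∫ X, (ball X₀ r).indicator h X = ∫ X, (ball X₀ r).indicator h (X₀ + X) :=
    (integral_add_left_eq_self _ X₀).symm
  have e3 : ∫ X, (ball X₀ r).indicator h (X₀ + X)
      = ∫ p : ℝ × ℝ, (ball X₀ r).indicator h (X₀ + !₂[p.1, p.2]) := by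
    rw [← (PiLp.volume_preserving_toLp (Fin 2)).integral_comp
      (MeasurableEquiv.toLp 2 _).measurableEmbedding]
    rw [← (volume_preserving_finTwoArrow ℝ).symm.integral_comp
      (MeasurableEquiv.finTwoArrow (α := ℝ)).symm.measurableEmbedding]
    rfl
  have e4 : ∀ p : ℝ × ℝ, X₀ + !₂[(polarCoord.symm p).1, (polarCoord.symm p).2]
      = arc X₀ p.1 p.2 := by
    intro p
    ext i; fin_cases i <;> simp [arc]
  rw [e1, e2, e3, ← integral_comp_polarCoord_symm]
  simp_rw [e4]
  have e5 : ∫ p in polarCoord.target, p.1 • (ball X₀ r).indicator h (arc X₀ p.1 p.2)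
      = ∫ p in polarCoord.target, (Iio r ×ˢ univ).indicator
          (fun p : ℝ × ℝ => p.1 * h (arc X₀ p.1 p.2)) p := by
    refine setIntegral_congr_fun polarCoord.open_target.measurableSet ?_
    rintro ⟨ρ, θ⟩ hp
    have hρ : 0 < ρ := hp.1
    by_cases hlt : ρ < r
    · have h1 : arc X₀ ρ θ ∈ ball X₀ r := by rw [mem_ball, dist_arc, abs_of_pos hρ]; exact hlt
      simp [h1, hlt]
    · have h1 : arc X₀ ρ θ ∉ ball X₀ r := by rw [mem_ball, dist_arc, abs_of_pos hρ]; exact hlt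
      simp [h1, hlt]
  rw [e5, setIntegral_indicator (measurableSet_Iio.prod MeasurableSet.univ)]
  refine setIntegral_congr_set ?_
  have e6 : polarCoord.target ∩ Iio r ×ˢ univ = Ioo 0 r ×ˢ Ioo (-Real.pi) Real.pi := by
    ext ⟨a, b⟩; simp; tauto
  rw [e6, ← Icc_prod_Icc, Measure.volume_eq_prod]
  exact Measure.set_prod_ae_eq Ioo_ae_eq_Icc Ioo_ae_eq_Icc

/-- The divergence theorem for a disc, obtained from the one for the rectangle
`[0, r] × [-π, π]` of polar coordinates; the two lateral contributions cancel by periodicity, and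
the one at `ρ = 0` vanishes because of the Jacobian. -/
lemma divergence_disc {Ω : Set Pt} (hΩ : IsOpen Ω) {P Q : Pt → ℝ}
    (hP : ContDiffOn ℝ 1 P Ω) (hQ : ContDiffOn ℝ 1 Q Ω) {X₀ : Pt} {r : ℝ} (hr : 0 < r)
    (hsub : closedBall X₀ r ⊆ Ω) :
    ∫ X in ball X₀ r, (pd 0 P X + pd 1 Q X)
      = r * ∫ θ in (-Real.pi)..Real.pi,
          (Real.cos θ * P (arc X₀ r θ) + Real.sin θ * Q (arc X₀ r θ)) := by
  have hpi := Real.pi_pos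
  have hmem : ∀ p ∈ Icc ((0 : ℝ), -Real.pi) (r, Real.pi), arc X₀ p.1 p.2 ∈ Ω := by
    intro p hp
    apply hsub
    rw [mem_closedBall, dist_arc, abs_of_nonneg hp.1.1]
    exact hp.2.1
  have hdiff : ∀ {g : Pt → ℝ}, ContDiffOn ℝ 1 g Ω → ∀ X ∈ Ω, DifferentiableAt ℝ g X :=
    fun hg X hX => (hg.contDiffAt (hΩ.mem_nhds hX)).differentiableAt (by norm_num)
  have hcont : ∀ {g : Pt → ℝ}, ContinuousOn g Ω →
      ContinuousOn (fun p : ℝ × ℝ => g (arc X₀ p.1 p.2)) (Icc ((0 : ℝ), -Real.pi) (r, Real.pi)) :=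
    fun hg => hg.comp (continuous_arc X₀).continuousOn hmem
  have hpd : ∀ {g : Pt → ℝ} (i), ContDiffOn ℝ 1 g Ω → ContinuousOn (pd i g) Ω := by
    intro g i hg
    exact (hg.continuousOn_fderiv_of_isOpen hΩ le_rfl).clm_apply continuousOn_const
  set f : ℝ × ℝ → ℝ := fun p =>
    p.1 * (Real.cos p.2 * P (arc X₀ p.1 p.2) + Real.sin p.2 * Q (arc X₀ p.1 p.2)) with hf
  set g : ℝ × ℝ → ℝ := fun p =>
    -Real.sin p.2 * P (arc X₀ p.1 p.2) + Real.cos p.2 * Q (arc X₀ p.1 p.2) with hg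
  have harcd : ∀ p : ℝ × ℝ, DifferentiableAt ℝ (fun p : ℝ × ℝ => arc X₀ p.1 p.2) p := by
    intro p; unfold arc; fun_prop
  have hcomp : ∀ {k : Pt → ℝ}, ContDiffOn ℝ 1 k Ω → ∀ p : ℝ × ℝ, arc X₀ p.1 p.2 ∈ Ω →
      DifferentiableAt ℝ (fun p : ℝ × ℝ => k (arc X₀ p.1 p.2)) p := by
    intro k hk p hp
    exact DifferentiableAt.comp p (hdiff hk _ hp) (harcd p)
  have hfd : ∀ p : ℝ × ℝ, arc X₀ p.1 p.2 ∈ Ω → DifferentiableAt ℝ f p := by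
    intro p hp
    have h1 := hcomp hP p hp
    have h2 := hcomp hQ p hp
    exact differentiableAt_fst.mul
      (((Real.differentiable_cos _).comp p differentiableAt_snd |>.mul h1).add
        ((Real.differentiable_sin _).comp p differentiableAt_snd |>.mul h2))
  have hgd : ∀ p : ℝ × ℝ, arc X₀ p.1 p.2 ∈ Ω → DifferentiableAt ℝ g p := by
    intro p hp
    have h1 := hcomp hP p hp
    have h2 := hcomp hQ p hp
    exact ((Real.differentiable_sin _).comp p differentiableAt_snd |>.neg.mul h1).add
      ((Real.differentiable_cos _).comp p differentiableAt_snd |>.mul h2)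
  -- the polar form of the divergence, including the Jacobian
  have hval : ∀ p : ℝ × ℝ, arc X₀ p.1 p.2 ∈ Ω →
      fderiv ℝ f p (1, 0) + fderiv ℝ g p (0, 1)
        = p.1 * (pd 0 P (arc X₀ p.1 p.2) + pd 1 Q (arc X₀ p.1 p.2)) := by
    rintro ⟨ρ, θ⟩ hp
    have hP' := hdiff hP _ hp
    have hQ' := hdiff hQ _ hp
    have a1 : HasDerivAt (fun t => f (t, θ)) (fderiv ℝ f (ρ, θ) (1, 0)) ρ :=
      (hfd (ρ, θ) hp).hasFDerivAt.comp_hasDerivAt (f := fun t => (t, θ)) ρ ((hasDerivAt_id ρ).prodMk (hasDerivAt_const ρ θ))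
    have a2 := (hasDerivAt_id ρ).mul (((hasDerivAt_radial hP').const_mul (Real.cos θ)).add
      ((hasDerivAt_radial hQ').const_mul (Real.sin θ)))
    have b1 : HasDerivAt (fun t => g (ρ, t)) (fderiv ℝ g (ρ, θ) (0, 1)) θ :=
      (hgd (ρ, θ) hp).hasFDerivAt.comp_hasDerivAt (f := fun t => (ρ, t)) θ ((hasDerivAt_const θ ρ).prodMk (hasDerivAt_id θ))
    have b2 := ((Real.hasDerivAt_sin θ).neg.mul (hasDerivAt_angular hP')).add
      ((Real.hasDerivAt_cos θ).mul (hasDerivAt_angular hQ'))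
    rw [a1.unique a2, b1.unique b2]
    simp only [id, Pi.add_apply, Pi.neg_apply]
    linear_combination (ρ * pd 0 P (arc X₀ ρ θ) + ρ * pd 1 Q (arc X₀ ρ θ)) *
      Real.sin_sq_add_cos_sq θ
  have hle : ((0 : ℝ), -Real.pi) ≤ (r, Real.pi) := ⟨hr.le, by linarith⟩
  have hcdiv : ContinuousOn (fun p : ℝ × ℝ =>
      p.1 * (pd 0 P (arc X₀ p.1 p.2) + pd 1 Q (arc X₀ p.1 p.2)))
      (Icc ((0 : ℝ), -Real.pi) (r, Real.pi)) :=
    continuousOn_fst.mul ((hcont (hpd 0 hP)).add (hcont (hpd 1 hQ)))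
  have key := integral_divergence_prod_Icc_of_hasFDerivAt_of_le f g (fderiv ℝ f) (fderiv ℝ g)
    (0, -Real.pi) (r, Real.pi) hle
    (fun p hp => (hfd p (hmem p hp)).continuousAt.continuousWithinAt)
    (fun p hp => (hgd p (hmem p hp)).continuousAt.continuousWithinAt)
    (fun p hp => (hfd p (hmem p ⟨⟨hp.1.1.le, hp.2.1.le⟩, ⟨hp.1.2.le, hp.2.2.le⟩⟩)).hasFDerivAt)
    (fun p hp => (hgd p (hmem p ⟨⟨hp.1.1.le, hp.2.1.le⟩, ⟨hp.1.2.le, hp.2.2.le⟩⟩)).hasFDerivAt)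
    ((hcdiv.congr fun p hp => hval p (hmem p hp)).integrableOn_compact isCompact_Icc)
  rw [setIntegral_congr_fun measurableSet_Icc fun p hp => hval p (hmem p hp)] at key
  rw [integral_ball_polar _ X₀ r, key]
  simp [hf, hg, arc]

/-! ### Arc length and Hausdorff measure on a circle -/

lemma dist_arc_arc (X₀ : Pt) {r : ℝ} (hr : 0 < r) (s t : ℝ) :
    dist (arc X₀ r s) (arc X₀ r t) = 2 * r * |Real.sin ((s - t) / 2)| := by
  rw [← sq_eq_sq₀ dist_nonneg (by positivity), dist_sq_Pt, mul_pow, sq_abs,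
    arc_zero, arc_one, arc_zero, arc_one, Real.sin_sq_eq_half_sub,
    show 2 * ((s - t) / 2) = s - t by ring, Real.cos_sub]
  linear_combination r ^ 2 * Real.sin_sq_add_cos_sq s + r ^ 2 * Real.sin_sq_add_cos_sq t

/-- A chord is at least `2/π` times as long as an arc of angle at most `π` that it subtends. -/
lemma abs_sub_le_chord (X₀ : Pt) {r : ℝ} (hr : 0 < r) {s t : ℝ} (hst : |s - t| ≤ Real.pi) :
    |s - t| ≤ Real.pi / (2 * r) * dist (arc X₀ r s) (arc X₀ r t) := by
  have h := Real.mul_abs_le_abs_sin (x := (s - t) / 2) (by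
    rw [abs_div, abs_two]; linarith)
  rw [abs_div, abs_two] at h
  rw [dist_arc_arc X₀ hr]
  have hpi := Real.pi_pos
  calc |s - t| = Real.pi / (2 * r) * (2 * r * (2 / Real.pi * (|s - t| / 2))) := by
        field_simp
    _ ≤ _ := by gcongr

lemma sphere_subset_arc (X₀ : Pt) {r : ℝ} (hr : 0 < r) :
    sphere X₀ r ⊆ arc X₀ r '' Icc (-Real.pi) Real.pi := by
  intro X hX
  have h : (X 0 - X₀ 0) ^ 2 + (X 1 - X₀ 1) ^ 2 = r ^ 2 := by
    rw [← dist_sq_Pt, mem_sphere.mp hX]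
  have hn : ‖(⟨X 0 - X₀ 0, X 1 - X₀ 1⟩ : ℂ)‖ = r := by
    rw [← sq_eq_sq₀ (norm_nonneg _) hr.le, Complex.sq_norm, Complex.normSq_mk]; linarith
  have h0 := Complex.norm_mul_cos_arg ⟨X 0 - X₀ 0, X 1 - X₀ 1⟩
  have h1 := Complex.norm_mul_sin_arg ⟨X 0 - X₀ 0, X 1 - X₀ 1⟩
  rw [hn] at h0 h1
  refine ⟨Complex.arg ⟨X 0 - X₀ 0, X 1 - X₀ 1⟩,
    ⟨(Complex.neg_pi_lt_arg _).le, Complex.arg_le_pi _⟩, ?_⟩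
  ext i
  fin_cases i
  · change arc X₀ r _ 0 = X 0
    rw [arc_zero, h0]; ring
  · change arc X₀ r _ 1 = X 1
    rw [arc_one, h1]; ring

/-- The length of an arc of angle at most `π` is at most `π/2` times its Hausdorff measure. -/
lemma volume_le_H1_image (X₀ : Pt) {r : ℝ} (hr : 0 < r) {s : Set ℝ}
    (hs : ∀ a ∈ s, ∀ b ∈ s, |a - b| ≤ Real.pi) :
    volume s ≤ ENNReal.ofReal (Real.pi / (2 * r)) * H1 (arc X₀ r '' s) := by
  have hinj : InjOn (arc X₀ r) s := by
    intro a ha b hb hab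
    have := abs_sub_le_chord X₀ hr (hs a ha b hb)
    rw [hab, dist_self, mul_zero] at this
    exact sub_eq_zero.mp (abs_eq_zero.mp (le_antisymm this (abs_nonneg _)))
  have hinv : ∀ a ∈ s, Function.invFunOn (arc X₀ r) s (arc X₀ r a) = a :=
    fun a ha => hinj.leftInvOn_invFunOn ha
  have hlip : LipschitzOnWith (Real.pi / (2 * r)).toNNReal (Function.invFunOn (arc X₀ r) s)
      (arc X₀ r '' s) := by
    refine LipschitzOnWith.of_dist_le_mul ?_
    rintro _ ⟨a, ha, rfl⟩ _ ⟨b, hb, rfl⟩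
    rw [hinv a ha, hinv b hb, Real.dist_eq, Real.coe_toNNReal _ (by positivity)]
    exact abs_sub_le_chord X₀ hr (hs a ha b hb)
  have h := hlip.hausdorffMeasure_image_le (d := 1) zero_le_one
  have him : Function.invFunOn (arc X₀ r) s '' (arc X₀ r '' s) = s := by
    rw [image_image]
    exact (image_congr hinv).trans (image_id' s)
  rw [him, hausdorffMeasure_real, ENNReal.rpow_one] at h
  exact h

lemma H1_sphere_lt_top (X₀ : Pt) {r : ℝ} (hr : 0 < r) : H1 (sphere X₀ r) < ∞ := by
  have hlip : LipschitzWith r.toNNReal (arc X₀ r) := by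
    refine LipschitzWith.of_dist_le_mul fun s t => ?_
    rw [dist_arc_arc X₀ hr, Real.coe_toNNReal _ hr.le, Real.dist_eq]
    have h := Real.abs_sin_le_abs (x := (s - t) / 2)
    rw [abs_div, abs_two] at h
    nlinarith
  calc H1 (sphere X₀ r) ≤ H1 (arc X₀ r '' Icc (-Real.pi) Real.pi) :=
        measure_mono (sphere_subset_arc X₀ hr)
    _ ≤ _ := hlip.hausdorffMeasure_image_le (d := 1) zero_le_one _
    _ < ∞ := by
      rw [hausdorffMeasure_real, ENNReal.rpow_one, Real.volume_Icc]
      exact ENNReal.mul_lt_top ENNReal.coe_lt_top ENNReal.ofReal_lt_top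

lemma map_arc_le (X₀ : Pt) {r : ℝ} (hr : 0 < r) :
    (volume.restrict (Ioc (-Real.pi) Real.pi)).map (arc X₀ r)
      ≤ ENNReal.ofReal (Real.pi / (2 * r)) • H1.restrict (sphere X₀ r) := by
  have hpi := Real.pi_pos
  have hc : Continuous (arc X₀ r) := by unfold arc; fun_prop
  refine Measure.le_iff.mpr fun S hS => ?_
  rw [Measure.map_apply hc.measurable hS, Measure.restrict_apply (hc.measurable hS),
    Measure.smul_apply, Measure.restrict_apply hS, smul_eq_mul]
  set T := arc X₀ r ⁻¹' S
  have hsp : ∀ θ, arc X₀ r θ ∈ sphere X₀ r := fun θ => by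
    rw [mem_sphere, dist_arc, abs_of_pos hr]
  -- the lower and the upper open half circle, which have disjoint images
  have hcover : T ∩ Ioc (-Real.pi) Real.pi
      ⊆ (T ∩ Ioo (-Real.pi) 0) ∪ (T ∩ Ioo 0 Real.pi) ∪ {0, Real.pi} := by
    rintro θ ⟨h1, h2, h3⟩
    rcases lt_trichotomy θ 0 with h | h | h
    · exact Or.inl (Or.inl ⟨h1, h2, h⟩)
    · exact Or.inr (Or.inl h)
    · rcases h3.lt_or_eq with h' | h'
      · exact Or.inl (Or.inr ⟨h1, h, h'⟩)
      · exact Or.inr (Or.inr h')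
  have hnull : volume ({0, Real.pi} : Set ℝ) = 0 := (Set.toFinite _).measure_zero _
  have hmeas : MeasurableSet {X : Pt | X₀ 1 < X 1} :=
    measurableSet_lt measurable_const (by fun_prop)
  have hlow : arc X₀ r '' (T ∩ Ioo (-Real.pi) 0) ⊆ (S ∩ sphere X₀ r) \ {X : Pt | X₀ 1 < X 1} := by
    rintro _ ⟨θ, ⟨h1, h2, h3⟩, rfl⟩
    refine ⟨⟨h1, hsp θ⟩, ?_⟩
    have := Real.sin_neg_of_neg_of_neg_pi_lt h3 h2
    simp only [mem_ofPred_eq, arc_one]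
    nlinarith
  have hupp : arc X₀ r '' (T ∩ Ioo 0 Real.pi) ⊆ (S ∩ sphere X₀ r) ∩ {X : Pt | X₀ 1 < X 1} := by
    rintro _ ⟨θ, ⟨h1, h2, h3⟩, rfl⟩
    refine ⟨⟨h1, hsp θ⟩, ?_⟩
    have := Real.sin_pos_of_pos_of_lt_pi h2 h3
    simp only [mem_ofPred_eq, arc_one]
    nlinarith
  have hv1 := volume_le_H1_image X₀ hr (s := T ∩ Ioo (-Real.pi) 0) (by
    rintro a ⟨-, ha⟩ b ⟨-, hb⟩
    rw [abs_le]; constructor <;> linarith [ha.1, ha.2, hb.1, hb.2])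
  have hv2 := volume_le_H1_image X₀ hr (s := T ∩ Ioo 0 Real.pi) (by
    rintro a ⟨-, ha⟩ b ⟨-, hb⟩
    rw [abs_le]; constructor <;> linarith [ha.1, ha.2, hb.1, hb.2])
  calc volume (T ∩ Ioc (-Real.pi) Real.pi)
      ≤ volume ((T ∩ Ioo (-Real.pi) 0) ∪ (T ∩ Ioo 0 Real.pi) ∪ {0, Real.pi}) :=
        measure_mono hcover
    _ ≤ volume (T ∩ Ioo (-Real.pi) 0) + volume (T ∩ Ioo 0 Real.pi) + 0 := by
        rw [← hnull]
        exact (measure_union_le _ _).trans (add_le_add_left (measure_union_le _ _) _)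
    _ ≤ ENNReal.ofReal (Real.pi / (2 * r)) * H1 ((S ∩ sphere X₀ r) \ {X : Pt | X₀ 1 < X 1})
        + ENNReal.ofReal (Real.pi / (2 * r)) * H1 ((S ∩ sphere X₀ r) ∩ {X : Pt | X₀ 1 < X 1}) := by
        rw [add_zero]
        exact add_le_add (hv1.trans (mul_le_mul_right (measure_mono hlow) _))
          (hv2.trans (mul_le_mul_right (measure_mono hupp) _))
    _ = ENNReal.ofReal (Real.pi / (2 * r)) * H1 (S ∩ sphere X₀ r) := by
        rw [← mul_add, add_comm, measure_inter_add_sdiff _ hmeas]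

/-- The integral with respect to arc length is at most `π/2` times the integral with respect to
Hausdorff measure. (The two are equal, but this comparison is all that is needed.) -/
lemma arc_integral_le (X₀ : Pt) {r : ℝ} (hr : 0 < r) {g : Pt → ℝ}
    (hg : ContinuousOn g (sphere X₀ r)) (hg0 : ∀ X ∈ sphere X₀ r, 0 ≤ g X) :
    r * ∫ θ in (-Real.pi)..Real.pi, g (arc X₀ r θ)
      ≤ Real.pi / 2 * ∫ X in sphere X₀ r, g X ∂H1 := by
  have hpi := Real.pi_pos
  have hc : Continuous (arc X₀ r) := by unfold arc; fun_prop
  have hms : MeasurableSet (sphere X₀ r) := isClosed_sphere.measurableSet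
  have haesm : AEStronglyMeasurable g (H1.restrict (sphere X₀ r)) :=
    hg.aestronglyMeasurable hms
  obtain ⟨M, hM⟩ := (isCompact_sphere X₀ r).exists_bound_of_continuousOn hg
  have hgint : IntegrableOn g (sphere X₀ r) H1 :=
    ⟨haesm, HasFiniteIntegral.restrict_of_bounded M (H1_sphere_lt_top X₀ hr)
      ((ae_restrict_iff' hms).mpr (ae_of_all _ hM))⟩
  have hle := map_arc_le X₀ hr
  have hgint' : Integrable g (ENNReal.ofReal (Real.pi / (2 * r)) • H1.restrict (sphere X₀ r)) :=
    hgint.smul_measure ENNReal.ofReal_ne_top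
  have h1 : ∫ θ in (-Real.pi)..Real.pi, g (arc X₀ r θ)
      = ∫ X, g X ∂((volume.restrict (Ioc (-Real.pi) Real.pi)).map (arc X₀ r)) := by
    rw [intervalIntegral.integral_of_le (by linarith),
      integral_map hc.aemeasurable (hgint'.aestronglyMeasurable.mono_measure hle)]
  have h2 : ∫ X, g X ∂((volume.restrict (Ioc (-Real.pi) Real.pi)).map (arc X₀ r))
      ≤ ∫ X, g X ∂(ENNReal.ofReal (Real.pi / (2 * r)) • H1.restrict (sphere X₀ r)) := by
    refine integral_mono_measure hle ?_ hgint'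
    exact (Measure.ae_smul_measure ((ae_restrict_iff' hms).mpr (ae_of_all _ hg0)) _)
  rw [integral_smul_measure, ENNReal.toReal_ofReal (by positivity), smul_eq_mul] at h2
  rw [h1]
  calc _ ≤ r * (Real.pi / (2 * r) * ∫ X in sphere X₀ r, g X ∂H1) := by gcongr
    _ = _ := by field_simp

/-! ### The differential equation in the positivity set -/

/-- The operator `div((1/x)∇w) = Δw/x - ∂ₓw/x²`. -/
noncomputable def axiOp (w : Pt → ℝ) (X : Pt) : ℝ :=
  (pd 0 (pd 0 w) X + pd 1 (pd 1 w) X) / X 0 - pd 0 w X / X 0 ^ 2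

lemma hasDerivAt_line {g : Pt → ℝ} {X : Pt} (hg : DifferentiableAt ℝ g X) (i : Fin 2) :
    HasDerivAt (fun t : ℝ => g (X + t • EuclideanSpace.single i 1)) (pd i g X) 0 :=
  hg.hasFDerivAt.hasLineDerivAt _

lemma pd_eq_of_line {g : Pt → ℝ} {X : Pt} (hg : DifferentiableAt ℝ g X) {i : Fin 2} {d : ℝ}
    (h : HasDerivAt (fun t : ℝ => g (X + t • EuclideanSpace.single i 1)) d 0) : pd i g X = d :=
  (hasDerivAt_line hg i).unique h

lemma pd_congr {g h : Pt → ℝ} {X : Pt} (H : g =ᶠ[𝓝 X] h) (i : Fin 2) : pd i g X = pd i h X := by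
  rw [pd, pd, H.fderiv_eq]

lemma pd_congr_eventually {g h : Pt → ℝ} {X : Pt} (H : g =ᶠ[𝓝 X] h) (i : Fin 2) :
    pd i g =ᶠ[𝓝 X] pd i h := by
  filter_upwards [H.eventuallyEq_nhds] with Y hY using pd_congr hY i

lemma pd_contDiffOn {g : Pt → ℝ} {U : Set Pt} (hU : IsOpen U) {n : WithTop ℕ∞}
    (hg : ContDiffOn ℝ (n + 1) g U) (i : Fin 2) : ContDiffOn ℝ n (pd i g) U :=
  (hg.fderiv_of_isOpen hU le_rfl).clm_apply contDiffOn_const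

lemma pd_continuousOn {g : Pt → ℝ} {U : Set Pt} (hU : IsOpen U)
    (hg : ContDiffOn ℝ 1 g U) (i : Fin 2) : ContinuousOn (pd i g) U :=
  (hg.continuousOn_fderiv_of_isOpen hU le_rfl).clm_apply continuousOn_const

lemma pd_pd_symm {g : Pt → ℝ} {X : Pt} (hg : ContDiffAt ℝ 2 g X) :
    pd 1 (pd 0 g) X = pd 0 (pd 1 g) X := by
  have hd : DifferentiableAt ℝ (fderiv ℝ g) X :=
    (hg.fderiv_right (m := 1) (by norm_num)).differentiableAt (by norm_num)
  have e : ∀ i j : Fin 2, pd j (pd i g) X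
      = fderiv ℝ (fderiv ℝ g) X (EuclideanSpace.single j 1) (EuclideanSpace.single i 1) := by
    intro i j
    have h := hd.hasFDerivAt.clm_apply
      (hasFDerivAt_const (EuclideanSpace.single i (1 : ℝ) : Pt) X)
    have h2 : fderiv ℝ (pd i g) X = _ := h.fderiv
    rw [pd, h2]; simp
  rw [e, e]
  exact hg.isSymmSndFDerivAt (by simp) _ _

lemma gradient_apply (g : Pt → ℝ) (X : Pt) (i : Fin 2) : gradient g X i = pd i g X := by
  have h : ⟪gradient g X, (EuclideanSpace.single i 1 : Pt)⟫ = pd i g X := by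
    rw [gradient, InnerProductSpace.toDual_symm_apply, pd]
  rw [← h, EuclideanSpace.inner_single_right]; simp

lemma norm_gradient_sq (g : Pt → ℝ) (X : Pt) :
    ‖gradient g X‖ ^ 2 = pd 0 g X ^ 2 + pd 1 g X ^ 2 := by
  rw [EuclideanSpace.norm_sq_eq, Fin.sum_univ_two, gradient_apply, gradient_apply]
  simp

lemma integrable_mul_of_tsupport {U : Set Pt} (hU : IsOpen U) {η h : Pt → ℝ}
    (hη : Continuous η) (hc : HasCompactSupport η) (hs : tsupport η ⊆ U)
    (hh : ContinuousOn h U) : Integrable (fun X => η X * h X) := by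
  refine Continuous.integrable_of_hasCompactSupport ?_ hc.mul_right
  refine continuous_of_tsupport fun X hX => ?_
  have hX' : X ∈ U := hs (closure_mono (fun Y hY => left_ne_zero_of_mul hY) hX)
  exact hη.continuousAt.mul (hh.continuousAt (hU.mem_nhds hX'))

/-- Integration by parts against a test function supported in `U`. -/
lemma test_by_parts {U : Set Pt} (hU : IsOpen U) {χ a : Pt → ℝ}
    (hχ : ContDiff ℝ (⊤ : ℕ∞) χ) (hc : HasCompactSupport χ) (hs : tsupport χ ⊆ U)
    (ha : ContDiffOn ℝ 1 a U) (i : Fin 2) :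
    Integrable (fun X => pd i χ X * a X) ∧ Integrable (fun X => χ X * pd i a X) ∧
      ∫ X, pd i χ X * a X = - ∫ X, χ X * pd i a X := by
  have hχ1 : ContDiff ℝ 1 χ := hχ.of_le (by exact_mod_cast le_top)
  have hcd : Continuous (pd i χ) :=
    (hχ1.continuous_fderiv (by norm_num)).clm_apply continuous_const
  have hsd : tsupport (pd i χ) ⊆ tsupport χ := by
    refine (closure_mono ?_).trans (tsupport_fderiv_subset ℝ (f := χ))
    intro X hX h0
    apply hX
    rw [pd, h0]; simp
  have hcc : HasCompactSupport (pd i χ) := hc.of_isClosed_subset (isClosed_tsupport _) hsd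
  have i1 := integrable_mul_of_tsupport hU hcd hcc (hsd.trans hs) ha.continuousOn
  have i2 := integrable_mul_of_tsupport hU hχ.continuous hc hs (pd_continuousOn hU ha i)
  have i3 := integrable_mul_of_tsupport hU hχ.continuous hc hs ha.continuousOn
  refine ⟨i1, i2, ?_⟩
  have := integral_mul_fderiv_eq_neg_fderiv_mul_of_integrable (μ := (volume : Measure Pt))
    (f := χ) (g := a) (v := EuclideanSpace.single i 1) i1 i2 i3
    (fun X _ => (hχ1.differentiable (by norm_num)) X)
    (fun X hX => (ha.contDiffAt (hU.mem_nhds (hs hX))).differentiableAt (by norm_num))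
  rw [eq_neg_iff_add_eq_zero, add_comm, ← eq_neg_iff_add_eq_zero]
  exact this

lemma hasDerivAt_primF {f : ℝ → ℝ} (hf : Continuous f) (z : ℝ) : HasDerivAt (primF f) (f z) z :=
  intervalIntegral.integral_hasDerivAt_right (hf.intervalIntegrable _ _)
    hf.stronglyMeasurable.stronglyMeasurableAtFilter hf.continuousAt

lemma contDiff_primF {f : ℝ → ℝ} (hf : Continuous f) : ContDiff ℝ 1 (primF f) := by
  rw [contDiff_one_iff_deriv]
  refine ⟨fun z => (hasDerivAt_primF hf z).differentiableAt, ?_⟩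
  rwa [show deriv (primF f) = f from funext fun z => (hasDerivAt_primF hf z).deriv]

lemma isOpen_pos {Ω : Set Pt} {ψ : Pt → ℝ} {f : ℝ → ℝ} (h : VariationalSolution Ω ψ f) :
    IsOpen (Ω ∩ {X : Pt | 0 < ψ X}) :=
  h.cont.isOpen_inter_preimage h.open_dom isOpen_Ioi

/-- Since `Ω` is open in the plane and contained in `{x ≥ 0}`, it does not meet the axis. -/
lemma pos_of_mem {Ω : Set Pt} {ψ : Pt → ℝ} {f : ℝ → ℝ} (h : VariationalSolution Ω ψ f)
    {X : Pt} (hX : X ∈ Ω) : 0 < X 0 := by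
  obtain ⟨ε, hε, hb⟩ := Metric.isOpen_iff.mp h.open_dom X hX
  have hm : arc X (ε / 2) Real.pi ∈ Ω := by
    apply hb
    rw [mem_ball, dist_arc, abs_of_pos (by linarith)]
    linarith
  have := h.halfplane _ hm
  rw [arc_zero, Real.cos_pi] at this
  linarith

/-- The energy density `|∇ψ|²/x - 2xF(ψ) + xy` in the positivity set. -/
noncomputable def energyDensity (ψ : Pt → ℝ) (f : ℝ → ℝ) (X : Pt) : ℝ :=
  (pd 0 ψ X ^ 2 + pd 1 ψ X ^ 2) / X 0 - 2 * X 0 * primF f (ψ X) + X 0 * X 1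

lemma integral_four {μ : Measure Pt} {a b c d : Pt → ℝ} (ha : Integrable a μ)
    (hb : Integrable b μ) (hc : Integrable c μ) (hd : Integrable d μ) (s t : ℝ) :
    ∫ X, (s * a X + t * b X + t * c X + d X) ∂μ
      = s * (∫ X, a X ∂μ) + t * (∫ X, b X ∂μ) + t * (∫ X, c X ∂μ) + ∫ X, d X ∂μ := by
  have h1 : Integrable (fun X => s * a X + t * b X) μ := (ha.const_mul s).add (hb.const_mul t)
  have h2 : Integrable (fun X => s * a X + t * b X + t * c X) μ := h1.add (hc.const_mul t)
  rw [integral_add h2 hd, integral_add h1 (hc.const_mul t),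
    integral_add (ha.const_mul s) (hb.const_mul t), integral_const_mul, integral_const_mul,
    integral_const_mul]

lemma hasDerivAt_coord (X : Pt) (j k : Fin 2) :
    HasDerivAt (fun t : ℝ => (X + t • EuclideanSpace.single j 1 : Pt) k)
      (if k = j then 1 else 0) 0 := by
  have h : (fun t : ℝ => (X + t • EuclideanSpace.single j 1 : Pt) k)
      = fun t : ℝ => X k + t * (if k = j then 1 else 0) := by
    funext t; simp
  rw [h]
  simpa using ((hasDerivAt_id (0 : ℝ)).mul_const (if k = j then (1 : ℝ) else 0)).const_add (X k)

section pointwise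

variable {U : Set Pt} {ψ : Pt → ℝ} {f : ℝ → ℝ}

lemma contDiffOn_energyDensity (hU : IsOpen U) (hx : ∀ X ∈ U, X 0 ≠ 0)
    (hψ : ContDiffOn ℝ 2 ψ U) (hf : Continuous f) : ContDiffOn ℝ 1 (energyDensity ψ f) U := by
  have h0 := pd_contDiffOn (n := 1) hU hψ 0
  have h1 := pd_contDiffOn (n := 1) hU hψ 1
  have c0 : ContDiffOn ℝ 1 (fun X : Pt => X 0) U := by fun_prop
  have c1 : ContDiffOn ℝ 1 (fun X : Pt => X 1) U := by fun_prop
  have hF : ContDiffOn ℝ 1 (fun X => primF f (ψ X)) U :=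
    (contDiff_primF hf).comp_contDiffOn (hψ.of_le (by norm_num))
  exact ((((h0.pow 2).add (h1.pow 2)).div c0 hx).sub ((contDiffOn_const.mul c0).mul hF)).add
    (c0.mul c1)

lemma contDiffOn_flux (hU : IsOpen U) (hx : ∀ X ∈ U, X 0 ≠ 0)
    (hψ : ContDiffOn ℝ 2 ψ U) (i k : Fin 2) :
    ContDiffOn ℝ 1 (fun X => 2 / X 0 * (pd i ψ X * pd k ψ X)) U := by
  have h0 := pd_contDiffOn (n := 1) hU hψ i
  have h1 := pd_contDiffOn (n := 1) hU hψ k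
  have c0 : ContDiffOn ℝ 1 (fun X : Pt => X 0) U := by fun_prop
  exact (contDiffOn_const.div c0 hx).mul (h0.mul h1)

lemma differentiableAt_of_contDiffOn (hU : IsOpen U) {g : Pt → ℝ} (hg : ContDiffOn ℝ 1 g U)
    {X : Pt} (hX : X ∈ U) : DifferentiableAt ℝ g X :=
  (hg.contDiffAt (hU.mem_nhds hX)).differentiableAt (by norm_num)

lemma pd_energyDensity (hU : IsOpen U) (hx : ∀ X ∈ U, X 0 ≠ 0)
    (hψ : ContDiffOn ℝ 2 ψ U) (hf : Continuous f) {X : Pt} (hX : X ∈ U) (j : Fin 2) :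
    pd j (energyDensity ψ f) X
      = (2 * pd 0 ψ X * pd j (pd 0 ψ) X + 2 * pd 1 ψ X * pd j (pd 1 ψ) X) / X 0
        - (pd 0 ψ X ^ 2 + pd 1 ψ X ^ 2) * (if 0 = j then 1 else 0) / X 0 ^ 2
        - 2 * (if 0 = j then 1 else 0) * primF f (ψ X) - 2 * X 0 * (f (ψ X) * pd j ψ X)
        + ((if 0 = j then 1 else 0) * X 1 + X 0 * (if 1 = j then 1 else 0)) := by
  refine pd_eq_of_line (differentiableAt_of_contDiffOn hU
    (contDiffOn_energyDensity hU hx hψ hf) hX) ?_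
  have h0 := hasDerivAt_line (differentiableAt_of_contDiffOn hU (pd_contDiffOn hU hψ 0) hX) j
  have h1 := hasDerivAt_line (differentiableAt_of_contDiffOn hU (pd_contDiffOn hU hψ 1) hX) j
  have hp := hasDerivAt_line (differentiableAt_of_contDiffOn hU (hψ.of_le (by norm_num)) hX) j
  have c0 := hasDerivAt_coord X j 0
  have c1 := hasDerivAt_coord X j 1
  have hF : HasDerivAt (fun t : ℝ => primF f (ψ (X + t • EuclideanSpace.single j 1)))
      (f (ψ X) * pd j ψ X) 0 := by
    refine HasDerivAt.comp (h₂ := primF f) 0 ?_ hp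
    simpa using hasDerivAt_primF hf (ψ X)
  have hxX := hx X hX
  have := ((((h0.pow 2).add (h1.pow 2)).div c0 (by simpa using hxX)).sub
    ((c0.const_mul 2).mul hF)).add (c0.mul c1)
  refine this.congr_deriv ?_
  simp only [Pi.add_apply, Pi.pow_apply, zero_smul, add_zero]
  field_simp
  ring

lemma pd_flux (hU : IsOpen U) (hx : ∀ X ∈ U, X 0 ≠ 0)
    (hψ : ContDiffOn ℝ 2 ψ U) {X : Pt} (hX : X ∈ U) (i k j : Fin 2) :
    pd j (fun X => 2 / X 0 * (pd i ψ X * pd k ψ X)) X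
      = 2 / X 0 * (pd j (pd i ψ) X * pd k ψ X + pd i ψ X * pd j (pd k ψ) X)
        - 2 * (if 0 = j then 1 else 0) / X 0 ^ 2 * (pd i ψ X * pd k ψ X) := by
  refine pd_eq_of_line (differentiableAt_of_contDiffOn hU
    (contDiffOn_flux hU hx hψ i k) hX) ?_
  have h0 := hasDerivAt_line (differentiableAt_of_contDiffOn hU (pd_contDiffOn hU hψ i) hX) j
  have h1 := hasDerivAt_line (differentiableAt_of_contDiffOn hU (pd_contDiffOn hU hψ k) hX) j
  have c0 := hasDerivAt_coord X j 0
  have hxX := hx X hX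
  have := ((hasDerivAt_const (0 : ℝ) (2 : ℝ)).div c0 (by simpa using hxX)).mul (h0.mul h1)
  refine this.congr_deriv ?_
  simp only [Pi.mul_apply, Pi.div_apply, zero_smul, add_zero]
  field_simp
  ring

end pointwise

/-- The domain variation along `χ eᵢ`, for a test function `χ` supported in the positivity set,
integrated by parts. -/
lemma weak_momentum {Ω : Set Pt} {ψ : Pt → ℝ} {f : ℝ → ℝ} (h : VariationalSolution Ω ψ f)
    (i : Fin 2) {χ : Pt → ℝ} (hχ : ContDiff ℝ (⊤ : ℕ∞) χ) (hc : HasCompactSupport χ)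
    (hs : tsupport χ ⊆ Ω ∩ {X : Pt | 0 < ψ X}) :
    ∫ X, χ X * (pd i ψ X * (axiOp ψ X + X 0 * f (ψ X))) = 0 := by
  set U := Ω ∩ {X : Pt | 0 < ψ X} with hUdef
  have hU : IsOpen U := isOpen_pos h
  have hx : ∀ X ∈ U, X 0 ≠ 0 := fun X hX => (pos_of_mem h hX.1).ne'
  have hψ : ContDiffOn ℝ 2 ψ U := h.smooth
  have hf := h.cont_f
  have hχd : Differentiable ℝ χ := hχ.differentiable (by simp)
  have hfd : ∀ X v, fderiv ℝ (fun X => χ X • (EuclideanSpace.single i 1 : Pt)) X v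
      = fderiv ℝ χ X v • (EuclideanSpace.single i 1 : Pt) := by
    intro X v
    rw [((hχd X).hasFDerivAt.smul_const (EuclideanSpace.single i 1 : Pt)).fderiv]
    simp
  have hsub : tsupport (fun X => χ X • (EuclideanSpace.single i 1 : Pt)) ⊆ tsupport χ :=
    tsupport_smul_subset_left χ _
  have hdv := h.domain_variation (fun X => χ X • (EuclideanSpace.single i 1 : Pt))
    (hχ.smul contDiff_const) hc.smul_right (hsub.trans (hs.trans inter_subset_left)) (by
      intro X hX0
      have : χ X = 0 := by
        by_contra hne
        exact hx X (hs (subset_tsupport χ hne)) hX0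
      simp [this])
  have hzero : ∀ X ∉ U, χ X = 0 ∧ fderiv ℝ χ X = 0 := by
    intro X hX
    have h1 : X ∉ tsupport χ := fun h' => hX (hs h')
    refine ⟨image_eq_zero_of_notMem_tsupport h1, ?_⟩
    by_contra hne
    exact h1 (tsupport_fderiv_subset ℝ (subset_tsupport (fderiv ℝ χ) hne))
  have hdiv : ∀ X, divg (fun X => χ X • (EuclideanSpace.single i 1 : Pt)) X = pd i χ X := by
    intro X
    simp only [divg, hfd, Fin.sum_univ_two]
    fin_cases i <;> simp [pd]
  have hin : ∀ X, ⟪gradient ψ X, fderiv ℝ (fun X => χ X • (EuclideanSpace.single i 1 : Pt)) X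
      (gradient ψ X)⟫ = (pd 0 ψ X * pd 0 χ X + pd 1 ψ X * pd 1 χ X) * pd i ψ X := by
    intro X
    rw [hfd, inner_smul_right, EuclideanSpace.inner_single_right, gradient_apply, fderiv_eq_pd,
      gradient_apply, gradient_apply]
    simp
  simp only [hdiv, hin, norm_gradient_sq] at hdv
  rw [setIntegral_eq_integral_of_forall_compl_eq_zero (fun X hX => by
    obtain ⟨h1, h2⟩ := hzero X (fun h' => hX h'.1)
    simp [pd, h1, h2])] at hdv
  have hA := contDiffOn_energyDensity hU hx hψ hf
  obtain ⟨a1, a2, a3⟩ := test_by_parts hU hχ hc hs hA i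
  obtain ⟨b1, b2, b3⟩ := test_by_parts hU hχ hc hs (contDiffOn_flux hU hx hψ i 0) 0
  obtain ⟨c1, c2, c3⟩ := test_by_parts hU hχ hc hs (contDiffOn_flux hU hx hψ i 1) 1
  -- the explicit dependence of the energy density on `xᵢ`
  set expl : Pt → ℝ := fun X => if i = 0 then
      -((pd 0 ψ X ^ 2 + pd 1 ψ X ^ 2) / X 0 ^ 2) - 2 * primF f (ψ X) + X 1 else X 0 with hexpl
  have hexplc : ContinuousOn expl U := by
    have h0 := pd_continuousOn hU (hψ.of_le (by norm_num)) 0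
    have h1 := pd_continuousOn hU (hψ.of_le (by norm_num)) 1
    have k0 : ContinuousOn (fun X : Pt => X 0) U := by fun_prop
    have k1 : ContinuousOn (fun X : Pt => X 1) U := by fun_prop
    have hF : ContinuousOn (fun X => primF f (ψ X)) U :=
      (contDiff_primF hf).continuous.comp_continuousOn hψ.continuousOn
    simp only [hexpl]
    split_ifs
    · exact (((((h0.pow 2).add (h1.pow 2)).div (k0.pow 2) (fun X hX => pow_ne_zero 2 (hx X hX))).neg).sub
        (continuousOn_const.mul hF)).add k1
    · exact k0
  have d1 := integrable_mul_of_tsupport hU hχ.continuous hc hs hexplc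
  have e1 : ∀ X, ((pd 0 ψ X ^ 2 + pd 1 ψ X ^ 2) / X 0 - 2 * X 0 * primF f (ψ X)
          + X 0 * X 1 * chiPos ψ X) * pd i χ X
        - 2 / X 0 * ((pd 0 ψ X * pd 0 χ X + pd 1 ψ X * pd 1 χ X) * pd i ψ X)
        + (-((pd 0 ψ X ^ 2 + pd 1 ψ X ^ 2) / X 0 ^ 2) - 2 * primF f (ψ X)
            + X 1 * chiPos ψ X) * (χ X • (EuclideanSpace.single i 1 : Pt)) 0
        + X 0 * chiPos ψ X * (χ X • (EuclideanSpace.single i 1 : Pt)) 1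
      = 1 * (pd i χ X * energyDensity ψ f X)
        + (-1) * (pd 0 χ X * (2 / X 0 * (pd i ψ X * pd 0 ψ X)))
        + (-1) * (pd 1 χ X * (2 / X 0 * (pd i ψ X * pd 1 ψ X))) + χ X * expl X := by
    intro X
    by_cases hX : X ∈ U
    · have : chiPos ψ X = 1 := if_pos hX.2
      rw [this]
      fin_cases i <;> simp [hexpl, energyDensity] <;> ring
    · obtain ⟨h1, h2⟩ := hzero X hX
      simp [pd, h1, h2]
  simp only [e1] at hdv
  rw [integral_four a1 b1 c1 d1, a3, b3, c3] at hdv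
  have e2 : ∀ X, χ X * (pd i ψ X * (axiOp ψ X + X 0 * f (ψ X)))
      = 1 / 2 * ((-1) * (χ X * pd i (energyDensity ψ f) X)
        + 1 * (χ X * pd 0 (fun X => 2 / X 0 * (pd i ψ X * pd 0 ψ X)) X)
        + 1 * (χ X * pd 1 (fun X => 2 / X 0 * (pd i ψ X * pd 1 ψ X)) X) + χ X * expl X) := by
    intro X
    by_cases hX : X ∈ U
    · have hxX := hx X hX
      have hsymm := pd_pd_symm (hψ.contDiffAt (hU.mem_nhds hX))
      rw [pd_energyDensity hU hx hψ hf hX, pd_flux hU hx hψ hX, pd_flux hU hx hψ hX]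
      fin_cases i
      · simp [hexpl, axiOp]
        rw [hsymm]
        field_simp
        ring
      · simp [hexpl, axiOp]
        rw [hsymm]
        field_simp
        ring
    · simp [(hzero X hX).1]
  simp only [e2]
  rw [integral_const_mul, integral_four a2 b2 c2 d1]
  linarith

lemma continuousOn_axiOp {U : Set Pt} (hU : IsOpen U) (hx : ∀ X ∈ U, X 0 ≠ 0) {w : Pt → ℝ}
    (hw : ContDiffOn ℝ 2 w U) : ContinuousOn (axiOp w) U := by
  have h0 := pd_contDiffOn (n := 1) hU hw 0
  have h1 := pd_contDiffOn (n := 1) hU hw 1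
  have k0 : ContinuousOn (fun X : Pt => X 0) U := by fun_prop
  exact (((pd_continuousOn hU h0 0).add (pd_continuousOn hU h1 1)).div k0 hx).sub
    (h0.continuousOn.div (k0.pow 2) (fun X hX => pow_ne_zero 2 (hx X hX)))

/-- The product of the equation with `∇ψ` holds pointwise in the positivity set. -/
lemma momentum {Ω : Set Pt} {ψ : Pt → ℝ} {f : ℝ → ℝ} (h : VariationalSolution Ω ψ f)
    (i : Fin 2) {X : Pt} (hX : X ∈ Ω ∩ {X : Pt | 0 < ψ X}) :
    pd i ψ X * (axiOp ψ X + X 0 * f (ψ X)) = 0 := by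
  have hU := isOpen_pos h
  have hx : ∀ X ∈ Ω ∩ {X : Pt | 0 < ψ X}, X 0 ≠ 0 := fun X hX => (pos_of_mem h hX.1).ne'
  have hcont : ContinuousOn (fun X => pd i ψ X * (axiOp ψ X + X 0 * f (ψ X)))
      (Ω ∩ {X : Pt | 0 < ψ X}) := by
    have k0 : ContinuousOn (fun X : Pt => X 0) (Ω ∩ {X : Pt | 0 < ψ X}) := by fun_prop
    exact (pd_continuousOn hU (h.smooth.of_le (by norm_num)) i).mul
      ((continuousOn_axiOp hU hx h.smooth).add
        (k0.mul (h.cont_f.comp_continuousOn h.smooth.continuousOn)))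
  have hae := hU.ae_eq_zero_of_integral_contDiff_smul_eq_zero
    (hcont.locallyIntegrableOn hU.measurableSet (μ := volume)) fun χ h1 h2 h3 => by
      simpa using weak_momentum h i h1 h2 h3
  exact Measure.eqOn_open_of_ae_eq (f := fun X => pd i ψ X * (axiOp ψ X + X 0 * f (ψ X)))
    (g := fun _ => 0) ((ae_restrict_iff' hU.measurableSet).mpr hae) hU hcont continuousOn_const hX

/-- `div((1/x)∇ψ) ≥ -C x ψ` wherever `0 < ψ < z₀`. The domain variation gives the differential
equation only where `∇ψ ≠ 0`, hence on the closure of that set; in the interior of `{∇ψ = 0}` the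
left-hand side vanishes. -/
lemma axiOp_lower {Ω : Set Pt} {ψ : Pt → ℝ} {f : ℝ → ℝ} (h : VariationalSolution Ω ψ f)
    {C z₀ : ℝ} (hC : ∀ z ∈ Ioo (0 : ℝ) z₀, |f z| ≤ C * z) {X : Pt}
    (hX : X ∈ Ω ∩ {X : Pt | 0 < ψ X}) (hz : ψ X < z₀) : -(C * X 0 * ψ X) ≤ axiOp ψ X := by
  have hU := isOpen_pos h
  have hx : ∀ X ∈ Ω ∩ {X : Pt | 0 < ψ X}, X 0 ≠ 0 := fun X hX => (pos_of_mem h hX.1).ne'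
  have hxX := pos_of_mem h hX.1
  have hfX := hC (ψ X) ⟨hX.2, hz⟩
  by_cases hcl : ∀ᶠ Y in 𝓝 X, pd 0 ψ Y = 0 ∧ pd 1 ψ Y = 0
  · have z0 : pd 0 ψ =ᶠ[𝓝 X] fun _ => 0 := hcl.mono fun Y hY => hY.1
    have z1 : pd 1 ψ =ᶠ[𝓝 X] fun _ => 0 := hcl.mono fun Y hY => hY.2
    have e0 : pd 0 (pd 0 ψ) X = 0 := by rw [pd_congr z0]; simp [pd]
    have e1 : pd 1 (pd 1 ψ) X = 0 := by rw [pd_congr z1]; simp [pd]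
    rw [axiOp, e0, e1, z0.eq_of_nhds]
    have : 0 ≤ X 0 * (C * ψ X) := mul_nonneg hxX.le ((abs_nonneg _).trans hfX)
    simp only [add_zero, zero_div, sub_zero]
    linarith
  · have hcont : ContinuousAt (fun Y => axiOp ψ Y + Y 0 * f (ψ Y)) X := by
      have k0 : ContinuousAt (fun X : Pt => X 0) X := by fun_prop
      exact ((continuousOn_axiOp hU hx h.smooth).continuousAt (hU.mem_nhds hX)).add
        (k0.mul (h.cont_f.continuousAt.comp (h.smooth.continuousOn.continuousAt (hU.mem_nhds hX))))
    have hE : axiOp ψ X + X 0 * f (ψ X) = 0 := by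
      by_contra hne
      apply hcl
      filter_upwards [hcont.eventually_ne hne, hU.mem_nhds hX] with Y hY hYU
      exact ⟨(mul_eq_zero.mp (momentum h 0 hYU)).resolve_right hY,
        (mul_eq_zero.mp (momentum h 1 hYU)).resolve_right hY⟩
    have : X 0 * f (ψ X) ≤ X 0 * (C * ψ X) :=
      mul_le_mul_of_nonneg_left ((le_abs_self _).trans hfX) hxX.le
    linarith

/-! ### The truncation `max(z - ε, 0)³ / z` of `z²` -/

lemma hasDerivAt_max_pow (n : ℕ) (t : ℝ) :
    HasDerivAt (fun t : ℝ => max t 0 ^ (n + 2)) ((n + 2) * max t 0 ^ (n + 1)) t := by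
  have hp : HasDerivAt (fun t : ℝ => t ^ (n + 2)) ((n + 2) * t ^ (n + 1)) t := by
    simpa using hasDerivAt_pow (n + 2) t
  rcases lt_trichotomy t 0 with h | h | h
  · rw [max_eq_right h.le, zero_pow (by omega), mul_zero]
    refine (hasDerivAt_const t (0 : ℝ)).congr_of_eventuallyEq ?_
    filter_upwards [gt_mem_nhds h] with s hs
    rw [max_eq_right hs.le, zero_pow (by omega)]
  · subst h
    have h1 : HasDerivWithinAt (fun t : ℝ => max t 0 ^ (n + 2)) 0 (Iic 0) 0 :=
      (hasDerivWithinAt_const (0 : ℝ) (Iic 0) (0 : ℝ)).congr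
        (fun s hs => by simp [max_eq_right (show s ≤ 0 from hs)]) (by simp)
    have h2 : HasDerivWithinAt (fun t : ℝ => max t 0 ^ (n + 2)) 0 (Ici 0) 0 :=
      ((hp.congr_deriv (by simp)).hasDerivWithinAt (s := Ici 0)).congr
        (fun s hs => by simp [max_eq_left (show 0 ≤ s from hs)]) (by simp)
    have h3 := h1.union h2
    rw [Iic_union_Ici, hasDerivWithinAt_univ] at h3
    simpa using h3
  · rw [max_eq_left h.le]
    refine hp.congr_of_eventuallyEq ?_
    filter_upwards [lt_mem_nhds h] with s hs
    rw [max_eq_left hs.le]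

lemma contDiff_max_cube : ContDiff ℝ 2 (fun t : ℝ => max t 0 ^ 3) := by
  have e (n : ℕ) : deriv (fun t : ℝ => max t 0 ^ (n + 2)) =
      fun t : ℝ => ((n : ℝ) + 2) * max t 0 ^ (n + 1) :=
    funext fun t => (hasDerivAt_max_pow n t).deriv
  have h1 : ContDiff ℝ 1 (fun t : ℝ => max t 0 ^ 2) := by
    rw [contDiff_one_iff_deriv]
    refine ⟨fun t => (hasDerivAt_max_pow 0 t).differentiableAt, ?_⟩
    rw [e 0]; fun_prop
  rw [show (2 : WithTop ℕ∞) = 1 + 1 by norm_num, contDiff_succ_iff_deriv]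
  refine ⟨fun t => (hasDerivAt_max_pow 1 t).differentiableAt, by simp, ?_⟩
  rw [e 1]
  exact contDiff_const.mul h1

/-- A `C²` truncation of `z ↦ z²` that vanishes for `z ≤ ε`. -/
noncomputable def cut (ε z : ℝ) : ℝ := max (z - ε) 0 ^ 3 / z

/-- The first derivative of `cut ε` on `(0, ∞)`. -/
noncomputable def cut₁ (ε z : ℝ) : ℝ := 3 * max (z - ε) 0 ^ 2 / z - max (z - ε) 0 ^ 3 / z ^ 2

/-- The second derivative of `cut ε` on `(0, ∞)`. -/
noncomputable def cut₂ (ε z : ℝ) : ℝ :=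
  6 * max (z - ε) 0 / z - 6 * max (z - ε) 0 ^ 2 / z ^ 2 + 2 * max (z - ε) 0 ^ 3 / z ^ 3

lemma hasDerivAt_cut (ε : ℝ) {z : ℝ} (hz : z ≠ 0) : HasDerivAt (cut ε) (cut₁ ε z) z := by
  have h3 : HasDerivAt (fun z => max (z - ε) 0 ^ 3) (3 * max (z - ε) 0 ^ 2) z := by
    refine ((hasDerivAt_max_pow 1 (z - ε)).comp_sub_const z ε).congr_deriv ?_
    norm_num
  refine (h3.div (hasDerivAt_id z) hz).congr_deriv ?_
  simp only [cut₁, id]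
  field_simp

lemma hasDerivAt_cut₁ (ε : ℝ) {z : ℝ} (hz : z ≠ 0) : HasDerivAt (cut₁ ε) (cut₂ ε z) z := by
  have h3 : HasDerivAt (fun z => max (z - ε) 0 ^ 3) (3 * max (z - ε) 0 ^ 2) z := by
    refine ((hasDerivAt_max_pow 1 (z - ε)).comp_sub_const z ε).congr_deriv ?_
    norm_num
  have h2 : HasDerivAt (fun z => max (z - ε) 0 ^ 2) (2 * max (z - ε) 0) z := by
    refine ((hasDerivAt_max_pow 0 (z - ε)).comp_sub_const z ε).congr_deriv ?_
    norm_num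
  refine (((h2.const_mul 3).div (hasDerivAt_id z) hz).sub
    (h3.div (hasDerivAt_pow 2 z) (pow_ne_zero 2 hz))).congr_deriv ?_
  simp only [cut₂, id]
  field_simp
  ring

lemma cut_eq_zero {ε z : ℝ} (h : z ≤ ε) : cut ε z = 0 := by
  simp [cut, max_eq_right (sub_nonpos.mpr h)]

lemma cut_bounds {ε z : ℝ} (hε : 0 < ε) (hz : 0 < z) :
    0 ≤ cut₂ ε z ∧ 0 ≤ cut₁ ε z ∧ cut₁ ε z * z ≤ 3 * z ^ 2 ∧ 0 ≤ cut ε z ∧ cut ε z ≤ z ^ 2 ∧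
      z ^ 2 - 3 * ε * z ≤ cut ε z := by
  obtain ⟨q, hq⟩ : ∃ q, max (z - ε) 0 = q * z := ⟨max (z - ε) 0 / z, by field_simp⟩
  have q0 : 0 ≤ q := by
    have : 0 ≤ q * z := hq ▸ le_max_right _ _
    exact nonneg_of_mul_nonneg_left this hz
  have q1 : q ≤ 1 := by
    have : q * z ≤ 1 * z := hq ▸ max_le (by linarith) (by linarith)
    exact le_of_mul_le_mul_right this hz
  have q2 : z - ε ≤ q * z := hq ▸ le_max_left _ _
  have e0 : cut ε z = q ^ 3 * z ^ 2 := by rw [cut, hq]; field_simp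
  have e1 : cut₁ ε z = (3 * q ^ 2 - q ^ 3) * z := by rw [cut₁, hq]; field_simp
  have e2 : cut₂ ε z = 6 * q - 6 * q ^ 2 + 2 * q ^ 3 := by rw [cut₂, hq]; field_simp
  have p2 : q ^ 2 ≤ 1 := pow_le_one₀ q0 q1
  have p3 : q ^ 3 ≤ 1 := pow_le_one₀ q0 q1
  have p3' : 0 ≤ q ^ 3 := by positivity
  have zz : 0 < z ^ 2 := by positivity
  refine ⟨?_, ?_, ?_, ?_, ?_, ?_⟩
  · rw [e2]
    nlinarith [mul_nonneg q0 (sub_nonneg.mpr q1)]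
  · rw [e1]
    refine mul_nonneg ?_ hz.le
    nlinarith [mul_nonneg (sq_nonneg q) (sub_nonneg.mpr q1), sq_nonneg q]
  · rw [e1]
    nlinarith
  · rw [e0]; positivity
  · rw [e0]; nlinarith
  · rw [e0]
    -- `q³ ≥ 1 - 3(1 - q)` and `z(1 - q) ≤ ε`
    have k : 3 * q - 2 ≤ q ^ 3 := by nlinarith [mul_nonneg (sq_nonneg (q - 1)) (by linarith : 0 ≤ q + 2)]
    nlinarith

/-! ### The truncated square of the solution -/

lemma pd_comp {g : ℝ → ℝ} {ψ : Pt → ℝ} {X : Pt} {d : ℝ} (hg : HasDerivAt g d (ψ X))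
    (hψ : DifferentiableAt ℝ ψ X) (i : Fin 2) : pd i (fun Y => g (ψ Y)) X = d * pd i ψ X := by
  have h : HasFDerivAt (fun Y => g (ψ Y)) (d • fderiv ℝ ψ X) X :=
    hg.comp_hasFDerivAt X hψ.hasFDerivAt
  rw [pd, h.fderiv]
  simp [pd]

section truncation

variable {Ω : Set Pt} {ψ : Pt → ℝ} {f : ℝ → ℝ}

lemma cut_eventually_zero (h : VariationalSolution Ω ψ f) {ε : ℝ} (hε : 0 < ε) {X : Pt}
    (hX : X ∈ Ω) (hψ : ψ X ≤ 0) : (fun Y => cut ε (ψ Y)) =ᶠ[𝓝 X] fun _ => 0 := by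
  have hc := h.cont.continuousAt (h.open_dom.mem_nhds hX)
  filter_upwards [hc.eventually_lt continuousAt_const (hψ.trans_lt hε)] with Y hY
  exact cut_eq_zero hY.le

lemma contDiffOn_cut (h : VariationalSolution Ω ψ f) {ε : ℝ} (hε : 0 < ε) :
    ContDiffOn ℝ 2 (fun X => cut ε (ψ X)) Ω := by
  intro X hX
  refine ContDiffAt.contDiffWithinAt ?_
  by_cases hpos : 0 < ψ X
  · have hψ : ContDiffAt ℝ 2 ψ X := h.smooth.contDiffAt ((isOpen_pos h).mem_nhds ⟨hX, hpos⟩)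
    exact (contDiff_max_cube.contDiffAt.comp X (hψ.sub contDiffAt_const)).div hψ hpos.ne'
  · exact contDiffAt_const.congr_of_eventuallyEq (cut_eventually_zero h hε hX (not_lt.mp hpos))

lemma axiOp_cut_zero (h : VariationalSolution Ω ψ f) {ε : ℝ} (hε : 0 < ε) {X : Pt}
    (hX : X ∈ Ω) (hψ : ψ X ≤ 0) : axiOp (fun Y => cut ε (ψ Y)) X = 0 := by
  have h0 := cut_eventually_zero h hε hX hψ
  have z (i : Fin 2) : pd i (fun Y => cut ε (ψ Y)) =ᶠ[𝓝 X] fun _ => 0 := by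
    filter_upwards [pd_congr_eventually h0 i] with Y hY
    rw [hY]; simp [pd]
  have e (i : Fin 2) : pd i (pd i (fun Y => cut ε (ψ Y))) X = 0 := by
    rw [pd_congr (z i)]; simp [pd]
  rw [axiOp, e, e, (z 0).eq_of_nhds]
  simp

lemma axiOp_cut (h : VariationalSolution Ω ψ f) (ε : ℝ) {X : Pt}
    (hX : X ∈ Ω ∩ {X : Pt | 0 < ψ X}) : axiOp (fun Y => cut ε (ψ Y)) X
      = cut₂ ε (ψ X) * (pd 0 ψ X ^ 2 + pd 1 ψ X ^ 2) / X 0 + cut₁ ε (ψ X) * axiOp ψ X := by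
  have hU := isOpen_pos h
  have hxX := (pos_of_mem h hX.1).ne'
  have hd : ∀ Y ∈ Ω ∩ {X : Pt | 0 < ψ X}, DifferentiableAt ℝ ψ Y := fun Y hY =>
    differentiableAt_of_contDiffOn hU (h.smooth.of_le (by norm_num)) hY
  have h1 (i : Fin 2) : pd i (fun Y => cut ε (ψ Y)) =ᶠ[𝓝 X] fun Y => cut₁ ε (ψ Y) * pd i ψ Y := by
    filter_upwards [hU.mem_nhds hX] with Y hY
    exact pd_comp (hasDerivAt_cut ε (ne_of_gt hY.2)) (hd Y hY) i
  have h2 (i : Fin 2) : pd i (pd i (fun Y => cut ε (ψ Y))) X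
      = cut₂ ε (ψ X) * pd i ψ X * pd i ψ X + cut₁ ε (ψ X) * pd i (pd i ψ) X := by
    have hc : HasFDerivAt (fun Y => cut₁ ε (ψ Y)) (cut₂ ε (ψ X) • fderiv ℝ ψ X) X :=
      (hasDerivAt_cut₁ ε (ne_of_gt hX.2)).comp_hasFDerivAt X (hd X hX).hasFDerivAt
    have hp := (differentiableAt_of_contDiffOn hU
      (pd_contDiffOn (n := 1) hU h.smooth i) hX).hasFDerivAt
    rw [pd_congr (h1 i), pd, (hc.fun_mul hp).fderiv]
    simp only [pd, add_apply, smul_apply, smul_eq_mul]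
    ring
  rw [axiOp, axiOp, h2, h2, (h1 0).eq_of_nhds]
  field_simp
  ring

/-- The truncated square is almost a subsolution; the bound does not depend on `ε`. -/
lemma axiOp_cut_lower (h : VariationalSolution Ω ψ f) {ε : ℝ} (hε : 0 < ε) {C z₀ : ℝ}
    (hC0 : 0 ≤ C) (hC : ∀ z ∈ Ioo (0 : ℝ) z₀, |f z| ≤ C * z) {X : Pt} (hX : X ∈ Ω)
    (hz : ψ X < z₀) : -(3 * C * X 0 * ψ X ^ 2) ≤ axiOp (fun Y => cut ε (ψ Y)) X := by
  have hx := pos_of_mem h hX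
  by_cases hpos : 0 < ψ X
  · obtain ⟨b2, b1, b1', -⟩ := cut_bounds hε hpos
    rw [axiOp_cut h ε ⟨hX, hpos⟩]
    have hlow := axiOp_lower h hC ⟨hX, hpos⟩ hz
    have k1 : 0 ≤ cut₂ ε (ψ X) * (pd 0 ψ X ^ 2 + pd 1 ψ X ^ 2) / X 0 := by positivity
    have k2 := mul_le_mul_of_nonneg_left hlow b1
    have k3 := mul_le_mul_of_nonneg_left b1' (mul_nonneg hC0 hx.le)
    nlinarith
  · rw [axiOp_cut_zero h hε hX (not_lt.mp hpos)]
    have : 0 ≤ 3 * C * X 0 * ψ X ^ 2 := by positivity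
    linarith

end truncation

/-! ### Green's formula in a disc -/

/-- The field `(η ∇w - w ∇η)/x` with `η = r² - |X - X₀|²`. -/
noncomputable def greenField (w : Pt → ℝ) (X₀ : Pt) (r : ℝ) (i : Fin 2) (X : Pt) : ℝ :=
  ((r ^ 2 - ((X 0 - X₀ 0) ^ 2 + (X 1 - X₀ 1) ^ 2)) * pd i w X + 2 * w X * (X i - X₀ i)) / X 0

lemma contDiffOn_greenField {U : Set Pt} (hU : IsOpen U) (hx : ∀ X ∈ U, X 0 ≠ 0) {w : Pt → ℝ}
    (hw : ContDiffOn ℝ 2 w U) (X₀ : Pt) (r : ℝ) (i : Fin 2) :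
    ContDiffOn ℝ 1 (greenField w X₀ r i) U := by
  have h0 := pd_contDiffOn (n := 1) hU hw i
  have hw1 : ContDiffOn ℝ 1 w U := hw.of_le (by norm_num)
  have c0 : ContDiffOn ℝ 1 (fun X : Pt => X 0) U := by fun_prop
  have cη : ContDiffOn ℝ 1
      (fun X : Pt => r ^ 2 - ((X 0 - X₀ 0) ^ 2 + (X 1 - X₀ 1) ^ 2)) U := by fun_prop
  have ci : ContDiffOn ℝ 1 (fun X : Pt => X i - X₀ i) U := by fun_prop
  exact ((cη.mul h0).add ((contDiffOn_const.mul hw1).mul ci)).div c0 hx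

lemma pd_greenField {U : Set Pt} (hU : IsOpen U) (hx : ∀ X ∈ U, X 0 ≠ 0) {w : Pt → ℝ}
    (hw : ContDiffOn ℝ 2 w U) (X₀ : Pt) (r : ℝ) (i : Fin 2) {X : Pt} (hX : X ∈ U) :
    pd i (greenField w X₀ r i) X
      = ((r ^ 2 - ((X 0 - X₀ 0) ^ 2 + (X 1 - X₀ 1) ^ 2)) * pd i (pd i w) X + 2 * w X) / X 0
        - (if 0 = i then 1 else 0) * greenField w X₀ r i X / X 0 := by
  refine pd_eq_of_line (differentiableAt_of_contDiffOn hU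
    (contDiffOn_greenField hU hx hw X₀ r i) hX) ?_
  have h0 := hasDerivAt_line (differentiableAt_of_contDiffOn hU (pd_contDiffOn hU hw i) hX) i
  have hp := hasDerivAt_line (differentiableAt_of_contDiffOn hU (hw.of_le (by norm_num)) hX) i
  have c0 := hasDerivAt_coord X i 0
  have c1 := hasDerivAt_coord X i 1
  have ci := hasDerivAt_coord X i i
  have hxX := hx X hX
  have := ((((hasDerivAt_const (0 : ℝ) (r ^ 2)).sub
      (((c0.sub_const (X₀ 0)).pow 2).add ((c1.sub_const (X₀ 1)).pow 2))).mul h0).add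
    ((hp.const_mul 2).mul (ci.sub_const (X₀ i)))).div c0 (by simpa using hxX)
  refine this.congr_deriv ?_
  simp only [greenField, Pi.add_apply, Pi.sub_apply, Pi.mul_apply, Pi.pow_apply, zero_smul,
    add_zero]
  fin_cases i
  · simp
    field_simp
    ring
  · simp
    field_simp
    ring

lemma green_div {U : Set Pt} (hU : IsOpen U) (hx : ∀ X ∈ U, X 0 ≠ 0) {w : Pt → ℝ}
    (hw : ContDiffOn ℝ 2 w U) (X₀ : Pt) (r : ℝ) {X : Pt} (hX : X ∈ U) :
    pd 0 (greenField w X₀ r 0) X + pd 1 (greenField w X₀ r 1) X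
      = (r ^ 2 - ((X 0 - X₀ 0) ^ 2 + (X 1 - X₀ 1) ^ 2)) * axiOp w X
        + w X / X 0 * (4 - 2 * (X 0 - X₀ 0) / X 0) := by
  rw [pd_greenField hU hx hw X₀ r 0 hX, pd_greenField hU hx hw X₀ r 1 hX]
  have hxX := hx X hX
  simp [greenField, axiOp]
  field_simp
  ring

lemma green_flux (w : Pt → ℝ) (X₀ : Pt) (r θ : ℝ) :
    Real.cos θ * greenField w X₀ r 0 (arc X₀ r θ) + Real.sin θ * greenField w X₀ r 1 (arc X₀ r θ)
      = 2 * r * (w (arc X₀ r θ) / arc X₀ r θ 0) := by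
  have e := Real.sin_sq_add_cos_sq θ
  have η0 : r ^ 2 - ((arc X₀ r θ 0 - X₀ 0) ^ 2 + (arc X₀ r θ 1 - X₀ 1) ^ 2) = 0 := by
    rw [arc_zero, arc_one]; linear_combination -r ^ 2 * e
  rw [greenField, greenField, η0]
  have a0 : arc X₀ r θ 0 - X₀ 0 = r * Real.cos θ := by rw [arc_zero]; ring
  have a1 : arc X₀ r θ 1 - X₀ 1 = r * Real.sin θ := by rw [arc_one]; ring
  rw [a0, a1]
  linear_combination (2 * r * (w (arc X₀ r θ) / arc X₀ r θ 0)) * e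

/-! ### The inequality on small discs -/

lemma bulk_le_of_small {Ω : Set Pt} {ψ : Pt → ℝ} {f : ℝ → ℝ} (h : VariationalSolution Ω ψ f)
    {C z₀ : ℝ} (hC0 : 0 ≤ C) (hC : ∀ z ∈ Ioo (0 : ℝ) z₀, |f z| ≤ C * z) {X₀ : Pt} {r : ℝ}
    (hr : 0 < r) (hsub : closedBall X₀ r ⊆ Ω) (hz : ∀ X ∈ closedBall X₀ r, ψ X < z₀)
    (hx1 : ∀ X ∈ closedBall X₀ r, 2 * (X 0 - X₀ 0) / X 0 ≤ 1 / 4)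
    (hx2 : ∀ X ∈ closedBall X₀ r, 3 * C * r ^ 2 * X 0 ^ 2 ≤ 1 / 4) :
    ∫ X in ball X₀ r, ψ X ^ 2 / X 0 ≤ r * bden ψ X₀ r := by
  have hΩ := h.open_dom
  have hxp : ∀ X ∈ Ω, 0 < X 0 := fun X hX => pos_of_mem h hX
  have hx : ∀ X ∈ Ω, X 0 ≠ 0 := fun X hX => (hxp X hX).ne'
  have c0 : ContinuousOn (fun X : Pt => X 0) Ω := by fun_prop
  have hgint : ∀ g : Pt → ℝ, ContinuousOn g Ω → IntegrableOn g (ball X₀ r) := fun g hg =>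
    ((hg.mono hsub).integrableOn_compact (isCompact_closedBall X₀ r)).mono_set
      ball_subset_closedBall
  have hc1 : ContinuousOn (fun X => ψ X / X 0) Ω := h.cont.div c0 hx
  have hc2 : ContinuousOn (fun X => ψ X ^ 2 / X 0) Ω := (h.cont.pow 2).div c0 hx
  have hsph : sphere X₀ r ⊆ Ω := sphere_subset_closedBall.trans hsub
  have hb0 : 0 ≤ bden ψ X₀ r :=
    setIntegral_nonneg isClosed_sphere.measurableSet fun X hX =>
      div_nonneg (sq_nonneg _) (hxp X (hsph hX)).le
  have harc : ∀ θ, arc X₀ r θ ∈ sphere X₀ r := fun θ => by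
    rw [mem_sphere, dist_arc, abs_of_pos hr]
  have hcarc : Continuous (arc X₀ r) := by unfold arc; fun_prop
  have hciarc (g : Pt → ℝ) (hg : ContinuousOn g Ω) :
      IntervalIntegrable (fun θ => g (arc X₀ r θ)) volume (-Real.pi) Real.pi :=
    (hg.comp_continuous hcarc fun θ => hsph (harc θ)).intervalIntegrable _ _
  have hB0 : 0 ≤ ∫ X in ball X₀ r, ψ X / X 0 :=
    setIntegral_nonneg measurableSet_ball fun X hX =>
      have hX' := hsub (ball_subset_closedBall hX)
      div_nonneg (h.nonneg X hX') (hxp X hX').le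
  have key : ∀ ε : ℝ, 0 < ε → 7 / 2 * (∫ X in ball X₀ r, ψ X ^ 2 / X 0)
      - 45 / 4 * ε * (∫ X in ball X₀ r, ψ X / X 0) ≤ Real.pi * r * bden ψ X₀ r := by
    intro ε hε
    set w : Pt → ℝ := fun X => cut ε (ψ X) with hw
    have hw2 : ContDiffOn ℝ 2 w Ω := contDiffOn_cut h hε
    have hg := contDiffOn_greenField hΩ hx hw2 X₀ r
    have hwle : ∀ X ∈ Ω, 0 ≤ w X ∧ w X ≤ ψ X ^ 2 ∧ ψ X ^ 2 - 3 * ε * ψ X ≤ w X := by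
      intro X hX
      rcases (h.nonneg X hX).eq_or_lt with h0 | hpos
      · simp [hw, ← h0, cut_eq_zero hε.le]
      · obtain ⟨-, -, -, a, b, c⟩ := cut_bounds hε hpos
        exact ⟨a, b, c⟩
    calc 7 / 2 * (∫ X in ball X₀ r, ψ X ^ 2 / X 0)
          - 45 / 4 * ε * (∫ X in ball X₀ r, ψ X / X 0)
        = ∫ X in ball X₀ r, (7 / 2 * (ψ X ^ 2 / X 0) - 45 / 4 * ε * (ψ X / X 0)) := by
          rw [integral_sub ((hgint _ hc2).const_mul _) ((hgint _ hc1).const_mul _),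
            integral_const_mul, integral_const_mul]
      _ ≤ ∫ X in ball X₀ r,
            (pd 0 (greenField w X₀ r 0) X + pd 1 (greenField w X₀ r 1) X) := by
          refine setIntegral_mono_on (hgint _ ?_) (hgint _ ?_) measurableSet_ball ?_
          · exact (continuousOn_const.mul hc2).sub (continuousOn_const.mul hc1)
          · exact (pd_continuousOn hΩ (hg 0) 0).add (pd_continuousOn hΩ (hg 1) 1)
          · intro X hX
            have hXc := ball_subset_closedBall hX
            have hXΩ := hsub hXc
            have hxX := hxp X hXΩ
            rw [green_div hΩ hx hw2 X₀ r hXΩ]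
            obtain ⟨w0, w1, w2⟩ := hwle X hXΩ
            have hlow := axiOp_cut_lower h hε hC0 hC hXΩ (hz X hXc)
            have hdist : (X 0 - X₀ 0) ^ 2 + (X 1 - X₀ 1) ^ 2 ≤ r ^ 2 := by
              rw [← dist_sq_Pt]
              exact pow_le_pow_left₀ dist_nonneg hXc 2
            set η := r ^ 2 - ((X 0 - X₀ 0) ^ 2 + (X 1 - X₀ 1) ^ 2) with hη
            have η0 : 0 ≤ η := by linarith
            have η1 : η ≤ r ^ 2 := by
              linarith [sq_nonneg (X 0 - X₀ 0), sq_nonneg (X 1 - X₀ 1)]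
            have s1 : -(1 / 4 * (ψ X ^ 2 / X 0)) ≤ η * axiOp w X := by
              have t1 : η * (3 * C * X 0 * ψ X ^ 2) ≤ r ^ 2 * (3 * C * X 0 * ψ X ^ 2) :=
                mul_le_mul_of_nonneg_right η1 (by positivity)
              have t2 := mul_le_mul_of_nonneg_left hlow η0
              have t3 : r ^ 2 * (3 * C * X 0 * ψ X ^ 2)
                  = (3 * C * r ^ 2 * X 0 ^ 2) * (ψ X ^ 2 / X 0) := by field_simp
              have t4 := mul_le_mul_of_nonneg_right (hx2 X hXc)
                (div_nonneg (sq_nonneg (ψ X)) hxX.le)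
              linarith
            have s2 : 15 / 4 * (w X / X 0)
                ≤ w X / X 0 * (4 - 2 * (X 0 - X₀ 0) / X 0) := by
              have := mul_le_mul_of_nonneg_left (hx1 X hXc) (div_nonneg w0 hxX.le)
              linarith
            have s3 : ψ X ^ 2 / X 0 - 3 * ε * (ψ X / X 0) ≤ w X / X 0 := by
              have := div_le_div_of_nonneg_right w2 hxX.le
              rwa [sub_div, mul_div_assoc] at this
            linarith
      _ = r * ∫ θ in (-Real.pi)..Real.pi, 2 * r * (w (arc X₀ r θ) / arc X₀ r θ 0) := by
          rw [divergence_disc hΩ (hg 0) (hg 1) hr hsub]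
          simp only [green_flux]
      _ ≤ r * ∫ θ in (-Real.pi)..Real.pi, 2 * r * (ψ (arc X₀ r θ) ^ 2 / arc X₀ r θ 0) := by
          refine mul_le_mul_of_nonneg_left ?_ hr.le
          refine intervalIntegral.integral_mono_on (by linarith [Real.pi_pos])
            ((hciarc _ (hw2.continuousOn.div c0 hx)).const_mul _)
            ((hciarc _ hc2).const_mul _) fun θ _ => ?_
          have hθ := hsph (harc θ)
          exact mul_le_mul_of_nonneg_left
            (div_le_div_of_nonneg_right (hwle _ hθ).2.1 (hxp _ hθ).le) (by positivity)
      _ = 2 * r * (r * ∫ θ in (-Real.pi)..Real.pi, ψ (arc X₀ r θ) ^ 2 / arc X₀ r θ 0) := by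
          rw [intervalIntegral.integral_const_mul]; ring
      _ ≤ 2 * r * (Real.pi / 2 * bden ψ X₀ r) :=
          mul_le_mul_of_nonneg_left
            (arc_integral_le X₀ hr (g := fun X => ψ X ^ 2 / X 0) (hc2.mono hsph) fun X hX =>
              div_nonneg (sq_nonneg _) (hxp X (hsph hX)).le) (by positivity)
      _ = Real.pi * r * bden ψ X₀ r := by ring
  have hlim : 7 / 2 * (∫ X in ball X₀ r, ψ X ^ 2 / X 0) ≤ Real.pi * r * bden ψ X₀ r := by
    set B := ∫ X in ball X₀ r, ψ X / X 0 with hB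
    refine le_of_forall_pos_le_add fun δ hδ => ?_
    have k := key (δ / (45 / 4 * (B + 1))) (by positivity)
    have : 45 / 4 * (δ / (45 / 4 * (B + 1))) * B = δ * (B / (B + 1)) := by field_simp
    rw [this] at k
    have : δ * (B / (B + 1)) ≤ δ * 1 :=
      mul_le_mul_of_nonneg_left ((div_le_one (by linarith)).mpr (by linarith)) hδ.le
    linarith
  -- the constant `7/2` beats `π`, the loss from comparing arc length with `H1`
  have hpi : Real.pi ≤ 7 / 2 := by linarith [Real.pi_lt_d2]
  have := mul_le_mul_of_nonneg_right hpi (mul_nonneg hr.le hb0)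
  linarith

/-- There exists `r₀ > 0` such that for all `r ∈ (0, r₀)`,
`r∫_{∂B_r(X₀)}(1/x)ψ² dH¹ ≥ ∫_{B_r(X₀)}(1/x)ψ² dX`. -/
theorem boundary_dominates_bulk (Ω : Set Pt) (ψ : Pt → ℝ) (f : ℝ → ℝ)
    (hsol : VariationalSolution Ω ψ f) (hgrowth : GrowthCondition Ω ψ)
    (hf : VorticityBound f) (X₀ : Pt) (hstag : StagnationPoint Ω ψ X₀) :
    ∃ r₀ : ℝ, 0 < r₀ ∧ ∀ r ∈ Set.Ioo (0:ℝ) r₀,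
      (∫ X in Metric.ball X₀ r, ψ X ^ 2 / X 0) ≤ r * bden ψ X₀ r := by
  obtain ⟨C, z₀, hz₀, hC⟩ := hf
  obtain ⟨⟨hX₀, -⟩, hx₀, hy₀⟩ := hstag
  have hC0 : 0 ≤ C := by
    have h1 := (abs_nonneg _).trans (hC (z₀ / 2) ⟨by linarith, by linarith⟩)
    exact nonneg_of_mul_nonneg_left h1 (by linarith)
  have hψ0 : ψ X₀ = 0 := hsol.zero_below X₀ hy₀.le
  have hnhds := hsol.open_dom.mem_nhds hX₀
  have k0 : ContinuousAt (fun X : Pt => X 0) X₀ := by fun_prop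
  have k1 : ContinuousAt (fun X : Pt => 2 * (X 0 - X₀ 0) / X 0) X₀ :=
    ContinuousAt.div (by fun_prop) k0 hx₀.ne'
  have hnear : ∀ᶠ X in 𝓝 X₀, X ∈ Ω ∧ ψ X < z₀ ∧ X 0 < 2 * X₀ 0 ∧
      2 * (X 0 - X₀ 0) / X 0 < 1 / 4 := by
    filter_upwards [hnhds,
      (hsol.cont.continuousAt hnhds).eventually_lt continuousAt_const (by rwa [hψ0] : ψ X₀ < z₀),
      k0.eventually_lt continuousAt_const (by linarith : X₀ 0 < 2 * X₀ 0),
      k1.eventually_lt continuousAt_const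
        (by simp : 2 * (X₀ 0 - X₀ 0) / X₀ 0 < (1 : ℝ) / 4)] with X a b c d using ⟨a, b, c, d⟩
  obtain ⟨R, hR, hball⟩ := Metric.eventually_nhds_iff_ball.mp hnear
  have hrad : ∀ᶠ r in 𝓝 (0 : ℝ), 3 * C * r ^ 2 * (2 * X₀ 0) ^ 2 < 1 / 4 := by
    have kr : ContinuousAt (fun r : ℝ => 3 * C * r ^ 2 * (2 * X₀ 0) ^ 2) 0 := by fun_prop
    exact kr.eventually_lt continuousAt_const (by simp)
  obtain ⟨S, hS, hrad⟩ := Metric.eventually_nhds_iff_ball.mp hrad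
  refine ⟨min R S, lt_min hR hS, fun r hr => ?_⟩
  have hrR : r < R := hr.2.trans_le (min_le_left _ _)
  have hrS : r < S := hr.2.trans_le (min_le_right _ _)
  have hnear' : ∀ X ∈ closedBall X₀ r, X ∈ Ω ∧ ψ X < z₀ ∧ X 0 < 2 * X₀ 0 ∧
      2 * (X 0 - X₀ 0) / X 0 < 1 / 4 := fun X hX => hball X (closedBall_subset_ball hrR hX)
  refine bulk_le_of_small hsol hC0 hC hr.1 (fun X hX => (hnear' X hX).1)
    (fun X hX => (hnear' X hX).2.1) (fun X hX => (hnear' X hX).2.2.2.le) fun X hX => ?_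
  have h1 := hrad r (by rwa [mem_ball, Real.dist_eq, sub_zero, abs_of_pos hr.1])
  have h2 : X 0 ^ 2 ≤ (2 * X₀ 0) ^ 2 :=
    pow_le_pow_left₀ (pos_of_mem hsol (hnear' X hX).1).le (hnear' X hX).2.2.1.le 2
  have h3 := mul_le_mul_of_nonneg_left h2 (by positivity : 0 ≤ 3 * C * r ^ 2)
  linarith
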